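/- Suppose the Nicholson system satisfies r_i · sup over t ∈ ℝ of ( β̃_i(t) · exp(∫_{t−r_i}^{t} d̃_i(s) ds) ) < e for each i = 1,…,m, and that it is uniformly persistent at 0: there exists M > 0 such that for every φ ∈ X₊ with φ(0) ≫ 0 there is t₀ with y_i(t,φ) ≥ M for all t ≥ t₀ and all i. Then there exists a unique positive almost periodic solution of the system — a function b : ℝ → ℝ^m with every component almost periodic, inf_{t∈ℝ} b_i(t) > 0 for each i, solving the system for all t ∈ ℝ — which asymptotically attracts every solution y(·,φ) with φ ∈ X₊ and φ(0) ≫ 0: max over i of sup over s ∈ [−r_i,0] of |y_i(t+s,φ) − b_i(t+s)| tends to 0 as t → ∞. -/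

import Mathlib

open MeasureTheory Filter Topology Set

noncomputable section

namespace Nicholson

/-- An almost periodic function: continuous, with a relatively dense set of
`ε`-periods for every `ε > 0`. -/
def AlmostPeriodic (f : ℝ → ℝ) : Prop :=
  Continuous f ∧ ∀ ε > 0, ∃ L > 0, ∀ a : ℝ, ∃ s ∈ Set.Icc a (a + L),
    ∀ t, |f (t + s) - f t| < ε

/-- The phase space `X = C([-r₁,0]) × ⋯ × C([-r_m,0])` (as plain functions;
continuity is carried by the solutions). -/
abbrev XN (m : ℕ) (r : Fin m → ℝ) := ∀ i : Fin m, Set.Icc (-(r i)) (0:ℝ) → ℝ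

/-- The cone `X₊` of componentwise nonnegative functions. -/
def XPos {m : ℕ} {r : Fin m → ℝ} (φ : XN m r) : Prop := ∀ i s, 0 ≤ φ i s

/-- The point `0 ∈ [-rᵢ,0]`. -/
def pt0N {m : ℕ} (r : Fin m → ℝ) (hr : ∀ i, 0 < r i) (i : Fin m) :
    Set.Icc (-(r i)) (0:ℝ) :=
  ⟨0, Set.mem_Icc.mpr ⟨by linarith [hr i], le_rfl⟩⟩

/-- The point `-rᵢ ∈ [-rᵢ,0]`. -/
def ptnegN {m : ℕ} (r : Fin m → ℝ) (hr : ∀ i, 0 < r i) (i : Fin m) :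
    Set.Icc (-(r i)) (0:ℝ)  :=
  ⟨-(r i), Set.mem_Icc.mpr ⟨le_rfl, by linarith [hr i]⟩⟩

/-- Conditions (a1)-(a6) on the coefficients of the Nicholson system. -/
def NicholsonHyps (m : ℕ) (d : Fin m → ℝ → ℝ) (a : Fin m → Fin m → ℝ → ℝ)
    (β c : Fin m → ℝ → ℝ) : Prop :=
  (∀ i, AlmostPeriodic (d i)) ∧ (∀ i j, AlmostPeriodic (a i j)) ∧
  (∀ i, AlmostPeriodic (β i)) ∧ (∀ i, AlmostPeriodic (c i)) ∧
  (∃ d₀ > 0, ∀ i t, d₀ ≤ d i t) ∧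
  (∀ i j t, 0 ≤ a i j t) ∧ (∀ i t, a i i t = 0) ∧
  (∀ i t, 0 < β i t) ∧
  (∃ c₀ > 0, ∀ i t, c₀ ≤ c i t) ∧
  (∀ i t, 0 < d i t - ∑ j, a j i t)

/-- The right-hand side of the `i`-th Nicholson equation along a function `y`. -/
def rhs {m : ℕ} (d : Fin m → ℝ → ℝ) (a : Fin m → Fin m → ℝ → ℝ) (β c : Fin m → ℝ → ℝ)
    (r : Fin m → ℝ) (i : Fin m) (t : ℝ) (y : ℝ → Fin m → ℝ) : ℝ :=
  -(d i t) * y t i + (∑ j, a i j t * y t j) +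
    β i t * y (t - r i) i * Real.exp (-(c i t * y (t - r i) i))

/-- `y` is the solution of the Nicholson system with initial value `φ ∈ X`. -/
def SolN {m : ℕ} (d : Fin m → ℝ → ℝ) (a : Fin m → Fin m → ℝ → ℝ) (β c : Fin m → ℝ → ℝ)
    (r : Fin m → ℝ) (φ : XN m r) (y : ℝ → Fin m → ℝ) : Prop :=
  (∀ i, ContinuousOn (fun t => y t i) (Set.Ici (-(r i)))) ∧
  (∀ i (s : Set.Icc (-(r i)) (0:ℝ)), y (s : ℝ) i = φ i s) ∧
  ∀ i t, 0 ≤ t → HasDerivWithinAt (fun u => y u i) (rhs d a β c r i t y) (Set.Ici t) t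

/-- `b` is an entire (globally defined) solution of the Nicholson system. -/
def EntireSolN {m : ℕ} (d : Fin m → ℝ → ℝ) (a : Fin m → Fin m → ℝ → ℝ)
    (β c : Fin m → ℝ → ℝ) (r : Fin m → ℝ) (b : ℝ → Fin m → ℝ) : Prop :=
  ∀ i t, HasDerivAt (fun u => b u i) (rhs d a β c r i t b) t

/-- The segment `y_t ∈ X` of `y`. -/
def segN {m : ℕ} (r : Fin m → ℝ) (y : ℝ → Fin m → ℝ) (t : ℝ) : XN m r :=
  fun i s => y (t + (s : ℝ)) i

/-- The exponential order `φ ≤_B ψ` for `B = diag(-μ₁,…,-μ_m)`. -/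
def expLeN {m : ℕ} (μ : Fin m → ℝ) {r : Fin m → ℝ} (φ ψ : XN m r) : Prop :=
  (∀ i s, φ i s ≤ ψ i s) ∧
  ∀ i, ∀ s t : Set.Icc (-(r i)) (0:ℝ), (s : ℝ) ≤ (t : ℝ) →
    (ψ i s - φ i s) * Real.exp (μ i * (s : ℝ)) ≤ (ψ i t - φ i t) * Real.exp (μ i * (t : ℝ))

/-- The zero element of `X`. -/
def zeroN (m : ℕ) (r : Fin m → ℝ) : XN m r := fun _ _ => 0

/-- Extension of the `i`-th component of `φ` to `ℝ` by the projection onto `[-rᵢ,0]`. -/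
def extN {m : ℕ} {r : Fin m → ℝ} (hr : ∀ i, 0 < r i) (φ : XN m r) (i : Fin m) : ℝ → ℝ :=
  fun s => φ i (Set.projIcc (-(r i)) 0 (by linarith [hr i]) s)

/-- `φ ≫_B 0`: `φ` is Lipschitz, `φᵢ(-rᵢ) > 0` and
`ess inf (φᵢ' + μᵢ φᵢ) > 0` on `[-rᵢ,0]` for each `i`. -/
def strPosN {m : ℕ} {r : Fin m → ℝ} (hr : ∀ i, 0 < r i) (μ : Fin m → ℝ)
    (φ : XN m r) : Prop :=
  (∀ i, ∃ K, LipschitzWith K (φ i)) ∧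
  (∀ i, 0 < φ i (ptnegN r hr i)) ∧
  ∀ i, ∃ ε > 0, ∀ᵐ s ∂(volume.restrict (Set.Ioo (-(r i)) (0:ℝ))),
    DifferentiableAt ℝ (extN hr φ i) s ∧
    ε ≤ deriv (extN hr φ i) s + μ i * extN hr φ i s

/-- The Nicholson nonlinearity `fᵢ(t,φ)`. -/
def fN {m : ℕ} (d : Fin m → ℝ → ℝ) (a : Fin m → Fin m → ℝ → ℝ) (β c : Fin m → ℝ → ℝ)
    (r : Fin m → ℝ) (hr : ∀ i, 0 < r i) (i : Fin m) (t : ℝ) (φ : XN m r) : ℝ :=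
  -(d i t) * φ i (pt0N r hr i) + (∑ j, a i j t * φ j (pt0N r hr j)) +
    β i t * φ i (ptnegN r hr i) * Real.exp (-(c i t * φ i (ptnegN r hr i)))

/-- The supremum over `ℝ` of a real function. -/
def supR (f : ℝ → ℝ) : ℝ := sSup (Set.range f)

/-- The exponents `μᵢ = (1/rᵢ) ln(e²/(rᵢ βᵢ⁺))`. -/
def muN {m : ℕ} (r : Fin m → ℝ) (β : Fin m → ℝ → ℝ) (i : Fin m) : ℝ :=
  (1 / r i) * Real.log (Real.exp 2 / (r i * supR (β i)))

end Nicholson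

namespace Nicholson

/-!
For two solutions `x`, `y` with values in `[M, K]`, `M > 0`, consider the gap `z = y - λ x` with
`0 < λ < 1`. Let `z` be positive and, multiplied by the integrating factor of rate `dᵢ + 1/rᵢ`,
increasing; then `zᵢ(t - rᵢ) ≤ e^{∫dᵢ + 1} zᵢ(t)`, the integral being over `[t - rᵢ, t]`. The Ricker
function `v e^{-cv}` has slope at least `-e⁻²`, so the delayed term costs at most
`e⁻² βᵢ zᵢ(t - rᵢ)`, which by the integral condition is at most `(1/rᵢ - η) zᵢ(t)` for some `η > 0`.
Hence both properties persist. Strict sublinearity of the Ricker function, together with the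
recurrent positivity of the almost periodic `βᵢ`, moreover makes the gap grow to a size comparable
to `λ (1 - λ)` in a fixed time, so that `λ` can be raised by `θ λ (1 - λ)`. Iterating, `λ → 1`;
exchanging the roles of `x` and `y`, any two solutions in `[M, K]` approach each other at a
uniform rate.

Dissipation of `∑ yᵢ` bounds solutions from above and persistence bounds them from below.
Translates of such a solution converge along common almost periods of the coefficients to an entire
solution `b`. The same attraction in every limit of translated systems allows at most one entire
solution with values in `[M, K]`, and so almost periods of the coefficients are almost periods
of `b`.
-/

section RealAnalysis

variable {f f' z z' w w' : ℝ → ℝ} {p q C : ℝ}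

lemma mul_sub_le_sub_of_le_deriv (hpq : p ≤ q) (hf : ContinuousOn f (Icc p q))
    (hf' : ∀ t ∈ Ioo p q, HasDerivAt f (f' t) t) (hC : ∀ t ∈ Ioo p q, C ≤ f' t) :
    C * (q - p) ≤ f q - f p := by
  refine (convex_Icc p q).mul_sub_le_image_sub_of_le_deriv hf (fun t ht ↦ ?_) (fun t ht ↦ ?_)
    p (left_mem_Icc.2 hpq) q (right_mem_Icc.2 hpq) hpq <;> rw [interior_Icc] at ht
  · exact (hf' t ht).differentiableAt.differentiableWithinAt
  · exact (hf' t ht).deriv ▸ hC t ht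

lemma mul_sub_le_mul_exp_sub_mul_exp (hpq : p ≤ q) (hz : ContinuousOn z (Icc p q))
    (hz' : ∀ t ∈ Ioo p q, HasDerivAt z (z' t) t) (hw : ∀ t, HasDerivAt w (w' t) t)
    (hC : ∀ t ∈ Ioo p q, C ≤ (z' t + w' t * z t) * Real.exp (w t)) :
    C * (q - p) ≤ z q * Real.exp (w q) - z p * Real.exp (w p) := by
  have hw_cont : Continuous w := continuous_iff_continuousAt.2 fun t ↦ (hw t).continuousAt
  refine mul_sub_le_sub_of_le_deriv (f := fun t ↦ z t * Real.exp (w t)) hpq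
    (hz.mul hw_cont.rexp.continuousOn) (fun t ht ↦ ?_) hC
  exact ((hz' t ht).mul (hw t).exp).congr_deriv (by ring)

lemma mul_exp_le_mul_exp (hpq : p ≤ q) (hz : ContinuousOn z (Icc p q))
    (hz' : ∀ t ∈ Ioo p q, HasDerivAt z (z' t) t) (hw : ∀ t, HasDerivAt w (w' t) t)
    (hnonneg : ∀ t ∈ Ioo p q, 0 ≤ z' t + w' t * z t) :
    z p * Real.exp (w p) ≤ z q * Real.exp (w q) := by
  have := mul_sub_le_mul_exp_sub_mul_exp (C := 0) hpq hz hz' hw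
    fun t ht ↦ mul_nonneg (hnonneg t ht) (Real.exp_pos _).le
  linarith

lemma mul_exp_neg_le_of_le_deriv_add_mul {A ρ : ℝ} (hA : 0 ≤ A) (hC : 0 ≤ C) (hρ : 0 ≤ ρ)
    (hpq : p + ρ ≤ q) (hz : ContinuousOn z (Icc p q))
    (hz' : ∀ t ∈ Ioo p q, HasDerivAt z (z' t) t) (hp : 0 ≤ z p)
    (hgrow : ∀ t ∈ Ioo p (p + ρ), C ≤ z' t + A * z t)
    (hkeep : ∀ t ∈ Ioo p q, 0 ≤ z' t + A * z t) :
    C * ρ * Real.exp (-(A * (q - p))) ≤ z q := by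
  have hw (t : ℝ) : HasDerivAt (fun t ↦ A * t) A t := by simpa using (hasDerivAt_id t).const_mul A
  have hgrow' := mul_sub_le_mul_exp_sub_mul_exp (C := C * Real.exp (A * p))
    (le_add_of_nonneg_right hρ) (hz.mono (Icc_subset_Icc_right hpq))
    (fun t ht ↦ hz' t ⟨ht.1, ht.2.trans_le hpq⟩) hw fun t ht ↦
      mul_le_mul (hgrow t ht)
        (Real.exp_le_exp.2 (mul_le_mul_of_nonneg_left ht.1.le hA)) (Real.exp_pos _).le
        (hC.trans (hgrow t ht))
  have hkeep' := mul_exp_le_mul_exp hpq (hz.mono (Icc_subset_Icc_left (le_add_of_nonneg_right hρ)))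
    (fun t ht ↦ hz' t ⟨(le_add_of_nonneg_right hρ).trans_lt ht.1, ht.2⟩) hw fun t ht ↦
      hkeep t ⟨(le_add_of_nonneg_right hρ).trans_lt ht.1, ht.2⟩
  refine le_of_mul_le_mul_right ?_ (Real.exp_pos (A * q))
  calc C * ρ * Real.exp (-(A * (q - p))) * Real.exp (A * q) = C * Real.exp (A * p) * ρ := by
        rw [mul_assoc (C * ρ), ← Real.exp_add]; ring_nf
    _ ≤ z q * Real.exp (A * q) := by
        rw [add_sub_cancel_left] at hgrow'
        linarith [mul_nonneg hp (Real.exp_pos (A * p)).le]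

lemma forall_pos_of_forall_Ico_pos {ι : Type*} [Finite ι] {F : ι → ℝ → ℝ} {T : ℝ}
    (hF : ∀ k, ContinuousOn (F k) (Ici T))
    (hstep : ∀ t, T ≤ t → (∀ s ∈ Ico T t, ∀ k, 0 < F k s) → ∀ k, 0 < F k t) :
    ∀ t, T ≤ t → ∀ k, 0 < F k t := by
  by_contra! hbad
  obtain ⟨t₁, ht₁, k₁, hk₁⟩ := hbad
  set B : Set ℝ := ⋃ k, Ici T ∩ F k ⁻¹' Iic 0
  have hB_closed : IsClosed B := isClosed_iUnion_of_finite fun k ↦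
    (hF k).preimage_isClosed_of_isClosed isClosed_Ici isClosed_Iic
  have hB_bdd : BddBelow B := ⟨T, fun t ht ↦ (mem_iUnion.1 ht).choose_spec.1⟩
  obtain ⟨k, hT, hk⟩ :=
    mem_iUnion.1 (hB_closed.csInf_mem ⟨t₁, mem_iUnion.2 ⟨k₁, ht₁, hk₁⟩⟩ hB_bdd)
  refine (hstep (sInf B) hT (fun s hs j ↦ ?_) k).not_ge hk
  by_contra hj
  exact hs.2.not_ge (csInf_le hB_bdd (mem_iUnion.2 ⟨j, hs.1, not_lt.1 hj⟩))

lemma hasDerivAt_of_hasDerivWithinAt_Ici {E : Type*} [NormedAddCommGroup E] [NormedSpace ℝ E]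
    [CompleteSpace E] {g g' : ℝ → E} {a t : ℝ} (hg : ContinuousOn g (Ici a))
    (hg' : ContinuousOn g' (Ici a))
    (hderiv : ∀ s, a ≤ s → HasDerivWithinAt g (g' s) (Ici s) s) (ht : a < t) :
    HasDerivAt g (g' t) t := by
  have hint : ∀ s, a ≤ s → ∫ u in a..s, g' u = g s - g a := fun s hs ↦
    intervalIntegral.integral_eq_sub_of_hasDeriv_right_of_le hs (hg.mono Icc_subset_Ici_self)
      (fun u hu ↦ (hderiv u hu.1.le).mono Ioi_subset_Ici_self)
      (hg'.mono (by rw [uIcc_of_le hs]; exact Icc_subset_Ici_self)).intervalIntegrable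
  have hFTC : HasDerivAt (fun s ↦ ∫ u in a..s, g' u) (g' t) t :=
    intervalIntegral.integral_hasDerivAt_right
      (hg'.mono (by rw [uIcc_of_le ht.le]; exact Icc_subset_Ici_self)).intervalIntegrable
      ((hg'.stronglyMeasurableAtFilter_nhdsWithin measurableSet_Ici t).filter_mono
        (by rw [nhdsWithin_eq_nhds.2 (Ici_mem_nhds ht)]))
      (hg'.continuousAt (Ici_mem_nhds ht))
  refine (hFTC.add_const (g a)).congr_of_eventuallyEq ?_
  filter_upwards [Ici_mem_nhds ht] with s hs
  rw [hint s hs, sub_add_cancel]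

lemma exists_pos_lt_one_mul_lt {p q : ℝ} (hp : 0 < p) (hq : 0 < q) (A B : ℝ) :
    ∃ θ : ℝ, 0 < θ ∧ θ < 1 ∧ θ * A < p ∧ θ * B < q := by
  have hsmall : ∀ x b : ℝ, 0 < x → ∀ᶠ θ in 𝓝[>] (0 : ℝ), θ * b < x := fun x b hx ↦
    Tendsto.eventually_lt_const (by simpa using hx)
      (tendsto_nhdsWithin_of_tendsto_nhds (tendsto_id.mul_const b))
  have hIoo : ∀ᶠ θ in 𝓝[>] (0 : ℝ), θ ∈ Ioo 0 1 := Ioo_mem_nhdsGT one_pos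
  obtain ⟨θ, ⟨hθ₀, hθ₁⟩, hA, hB⟩ := (hIoo.and ((hsmall p A hp).and (hsmall q B hq))).exists
  exact ⟨θ, hθ₀, hθ₁, hA, hB⟩

lemma exists_tendsto_of_eventually_mem_Icc {α : Type*} {U : Ultrafilter α} {g : α → ℝ} {M K : ℝ}
    (hg : ∀ᶠ n in U, g n ∈ Icc M K) : ∃ x ∈ Icc M K, Tendsto g U (𝓝 x) :=
  isCompact_Icc.ultrafilter_le_nhds (U.map g) (le_principal_iff.2 hg)

end RealAnalysis

section Ricker

/-- The Ricker birth function `v ↦ v e^{-cv}`, the delayed nonlinearity of the system. -/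
def ricker (c v : ℝ) : ℝ := v * Real.exp (-(c * v))

variable {c c₀ u v : ℝ}

lemma hasDerivAt_ricker (c v : ℝ) :
    HasDerivAt (ricker c) ((1 - c * v) * Real.exp (-(c * v))) v := by
  have hexp : HasDerivAt (fun v ↦ -(c * v)) (-(c * 1)) v := ((hasDerivAt_id v).const_mul c).neg
  exact ((hasDerivAt_id v).mul hexp.exp).congr_deriv (by simp only [id]; ring)

lemma continuous_ricker (c : ℝ) : Continuous (ricker c) := by
  unfold ricker
  fun_prop

lemma ricker_nonneg (hv : 0 ≤ v) : 0 ≤ ricker c v := mul_nonneg hv (Real.exp_pos _).le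

lemma ricker_le_self (hc : 0 ≤ c) (hv : 0 ≤ v) : ricker c v ≤ v :=
  mul_le_of_le_one_right hv (Real.exp_le_one_iff.2 (neg_nonpos.2 (mul_nonneg hc hv)))

lemma ricker_le_inv (hc₀ : 0 < c₀) (hc : c₀ ≤ c) : ricker c v ≤ c₀⁻¹ := by
  have hcpos : 0 < c := hc₀.trans_le hc
  calc ricker c v = c⁻¹ * (c * v * Real.exp (-(c * v))) := by rw [ricker]; field_simp
    _ ≤ c⁻¹ * 1 := by
      gcongr
      exact (Real.mul_exp_neg_le_exp_neg_one _).trans (Real.exp_le_one_iff.2 (by norm_num))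
    _ ≤ c₀⁻¹ := by rw [mul_one]; gcongr

-- The derivative `(1 - s) e^{-s}` of the Ricker function attains its minimum at `s = 2`.
lemma neg_exp_neg_two_mul_sub_le_ricker_sub (huv : u ≤ v) :
    -Real.exp (-2) * (v - u) ≤ ricker c v - ricker c u := by
  refine mul_sub_le_sub_of_le_deriv huv (continuous_ricker c).continuousOn
    (fun s _ ↦ hasDerivAt_ricker c s) fun s _ ↦ ?_
  have htangent := Real.add_one_le_exp (c * s - 2)
  have hexp : Real.exp (c * s - 2) * Real.exp (-(c * s)) = Real.exp (-2) := by
    rw [← Real.exp_add]; ring_nf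
  nlinarith [Real.exp_pos (-(c * s))]

lemma abs_ricker_sub_le (hc : 0 ≤ c) (hu : 0 ≤ u) (hv : 0 ≤ v) :
    |ricker c u - ricker c v| ≤ |u - v| := by
  have hderiv : ∀ s ∈ Ici (0 : ℝ), ‖(1 - c * s) * Real.exp (-(c * s))‖ ≤ 1 := fun s hs ↦ by
    have hcs : 0 ≤ c * s := mul_nonneg hc hs
    rw [norm_mul, Real.norm_eq_abs, Real.norm_of_nonneg (Real.exp_pos _).le]
    calc |1 - c * s| * Real.exp (-(c * s)) ≤ Real.exp (c * s) * Real.exp (-(c * s)) := by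
          gcongr
          rw [abs_le]
          constructor <;> linarith [Real.add_one_le_exp (c * s)]
      _ = 1 := by rw [← Real.exp_add, add_neg_cancel, Real.exp_zero]
  simpa using (convex_Ici (0 : ℝ)).norm_image_sub_le_of_norm_hasDerivWithin_le
    (fun s _ ↦ (hasDerivAt_ricker c s).hasDerivWithinAt) hderiv hv hu

lemma mul_le_ricker_mul_sub_mul_ricker {D M K lam x : ℝ} (hc₀ : 0 < c₀) (hc : c ∈ Icc c₀ D)
    (hM : 0 < M) (hx : x ∈ Icc M K) (hlam : lam ∈ Icc (0 : ℝ) 1) :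
    c₀ * M ^ 2 * Real.exp (-(D * K)) * (lam * (1 - lam)) ≤
      ricker c (lam * x) - lam * ricker c x := by
  obtain ⟨⟨hc, hcD⟩, hxM, hxK⟩ := hc, hx
  have hcpos : 0 < c := hc₀.trans_le hc
  have hxpos : 0 < x := hM.trans_le hxM
  have hlam' : 0 ≤ lam * (1 - lam) := mul_nonneg hlam.1 (sub_nonneg.2 hlam.2)
  have htangent := Real.add_one_le_exp (c * (1 - lam) * x)
  calc c₀ * M ^ 2 * Real.exp (-(D * K)) * (lam * (1 - lam))
      ≤ c * x ^ 2 * Real.exp (-(c * x)) * (lam * (1 - lam)) := by gcongr; linarith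
    _ = lam * x * Real.exp (-(c * x)) * (c * (1 - lam) * x) := by ring
    _ ≤ lam * x * Real.exp (-(c * x)) * (Real.exp (c * (1 - lam) * x) - 1) :=
        mul_le_mul_of_nonneg_left (by linarith)
          (mul_nonneg (mul_nonneg hlam.1 hxpos.le) (Real.exp_pos _).le)
    _ = lam * x * (Real.exp (-(c * x)) * Real.exp (c * (1 - lam) * x))
          - lam * (x * Real.exp (-(c * x))) := by ring
    _ = ricker c (lam * x) - lam * ricker c x := by
        rw [← Real.exp_add, ricker, ricker]; ring_nf

end Ricker

/-- Intervals of length `ρ` contained in `S` recur: one of them starts in every window of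
length `L`. -/
def HasRecurrentIntervals (S : Set ℝ) (L ρ : ℝ) : Prop :=
  ∀ T, ∃ s ∈ Icc T (T + L), Icc s (s + ρ) ⊆ S

/-- A family of nonnegative functions that are all positive at some common time. Unlike pointwise
positivity, this property of an almost periodic family passes to the limits of its translates. -/
def JointlyPositive {ι : Type*} (f : ι → ℝ → ℝ) : Prop :=
  (∀ k t, 0 ≤ f k t) ∧ ∃ t, ∀ k, 0 < f k t

namespace AlmostPeriodic

variable {f F : ℝ → ℝ}

lemma exists_abs_le (hf : AlmostPeriodic f) : ∃ B, ∀ t, |f t| ≤ B := by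
  obtain ⟨L, -, hperiod⟩ := hf.2 1 one_pos
  obtain ⟨B, hB⟩ := isCompact_Icc.exists_bound_of_continuousOn (s := Icc 0 L) hf.1.continuousOn
  refine ⟨B + 1, fun t ↦ ?_⟩
  obtain ⟨s, hs, hst⟩ := hperiod (-t)
  have hBs : |f (t + s)| ≤ B := hB (t + s) ⟨by linarith [hs.1], by linarith [hs.2]⟩
  linarith [abs_sub_abs_le_abs_sub (f t) (f (t + s)), abs_sub_comm (f t) (f (t + s)), hst t]

lemma bddAbove_range (hf : AlmostPeriodic f) : BddAbove (range f) := by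
  obtain ⟨B, hB⟩ := hf.exists_abs_le
  exact ⟨B, forall_mem_range.2 fun t ↦ le_of_abs_le (hB t)⟩

lemma uniformContinuous (hf : AlmostPeriodic f) : UniformContinuous f := by
  refine Metric.uniformContinuous_iff.2 fun ε hε ↦ ?_
  obtain ⟨L, -, hperiod⟩ := hf.2 (ε / 3) (by positivity)
  obtain ⟨δ, hδ, hunif⟩ := Metric.uniformContinuousOn_iff.1
    (isCompact_Icc.uniformContinuousOn_of_continuous (s := Icc (-1) (L + 1)) hf.1.continuousOn)
    (ε / 3) (by positivity)
  refine ⟨min δ 1, by positivity, fun {p q} hpq ↦ ?_⟩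
  obtain ⟨s, hs, hst⟩ := hperiod (-p)
  obtain ⟨hδpq, hpq⟩ := lt_min_iff.1 hpq
  rw [Real.dist_eq, abs_lt] at hpq
  have hclose : |f (p + s) - f (q + s)| < ε / 3 :=
    hunif (p + s) ⟨by linarith [hs.1], by linarith [hs.2]⟩ (q + s)
      ⟨by linarith [hs.1, hpq.2], by linarith [hs.2, hpq.1]⟩ (by rwa [dist_add_right])
  have hp := hst p
  have hq := hst q
  rw [Real.dist_eq, abs_lt] at *
  constructor <;> linarith [hp.1, hp.2, hq.1, hq.2, hclose.1, hclose.2]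

-- Almost periods bring the shifts `u n` back into a compact interval, where they converge.
lemma exists_eventually_forall_abs_sub_lt (hf : AlmostPeriodic f) {α : Type*} (U : Ultrafilter α)
    (u : α → ℝ) {ε : ℝ} (hε : 0 < ε) :
    ∃ v, ∀ᶠ n in U, ∀ t, |f (t + u n) - f (t + v)| < ε := by
  obtain ⟨L, -, hperiod⟩ := hf.2 (ε / 2) (by positivity)
  choose s hs hst using fun n ↦ hperiod (-u n)
  obtain ⟨v, -, hv⟩ := exists_tendsto_of_eventually_mem_Icc (U := U) (M := 0) (K := L)
    (.of_forall fun n ↦ ⟨by linarith [(hs n).1], by linarith [(hs n).2]⟩ :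
      ∀ᶠ n in U, u n + s n ∈ Icc 0 L)
  obtain ⟨δ, hδ, hunif⟩ :=
    Metric.uniformContinuous_iff.1 hf.uniformContinuous (ε / 2) (by positivity)
  refine ⟨v, (Metric.tendsto_nhds.1 hv δ hδ).mono fun n hn t ↦ ?_⟩
  have hperiod_n : |f (t + u n + s n) - f (t + u n)| < ε / 2 := hst n (t + u n)
  have hlimit : |f (t + u n + s n) - f (t + v)| < ε / 2 :=
    hunif (by rwa [add_assoc, dist_add_left])
  rw [abs_lt] at *
  constructor <;> linarith [hperiod_n.1, hperiod_n.2, hlimit.1, hlimit.2]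

lemma exists_tendstoUniformly_translate (hf : AlmostPeriodic f) {α : Type*} (U : Ultrafilter α)
    (u : α → ℝ) : ∃ F, TendstoUniformly (fun n t ↦ f (t + u n)) F U := by
  obtain ⟨B, hB⟩ := hf.exists_abs_le
  choose F _ hF using fun t ↦ exists_tendsto_of_eventually_mem_Icc (U := U)
    (.of_forall fun n ↦ abs_le.1 (hB (t + u n)))
  refine ⟨F, Metric.tendstoUniformly_iff.2 fun ε hε ↦ ?_⟩
  obtain ⟨v, hv⟩ := hf.exists_eventually_forall_abs_sub_lt U u (half_pos hε)
  have hFv : ∀ t, |F t - f (t + v)| ≤ ε / 2 := fun t ↦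
    le_of_tendsto ((hF t).sub_const _).abs (hv.mono fun n hn ↦ (hn t).le)
  filter_upwards [hv] with n hn t
  rw [Real.dist_eq]
  linarith [abs_sub_le (F t) (f (t + v)) (f (t + u n)), hFv t, hn t,
    abs_sub_comm (f (t + v)) (f (t + u n))]

lemma of_tendstoUniformly_translate (hf : AlmostPeriodic f) {α : Type*} {l : Filter α} [l.NeBot]
    {u : α → ℝ} (hF : TendstoUniformly (fun n t ↦ f (t + u n)) F l) : AlmostPeriodic F := by
  have hf_cont := hf.1
  refine ⟨hF.continuous (.of_forall fun n ↦ by fun_prop), fun ε hε ↦ ?_⟩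
  obtain ⟨L, hL, hperiod⟩ := hf.2 (ε / 2) (by positivity)
  refine ⟨L, hL, fun a ↦ ?_⟩
  obtain ⟨s, hs, hst⟩ := hperiod a
  refine ⟨s, hs, fun t ↦ lt_of_le_of_lt ?_ (half_lt_self hε)⟩
  refine le_of_tendsto ((hF.tendsto_at (t + s)).sub (hF.tendsto_at t)).abs (.of_forall fun n ↦ ?_)
  rw [add_right_comm]
  exact (hst (t + u n)).le

section Family

variable {ι : Type*} [Finite ι] {g : ι → ℝ → ℝ}

-- If windows of every length were free of common periods, take `u n` to be the midpoint of a free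
-- window of length `n`: along an ultrafilter, differences of the `u n` are common periods.
lemma exists_common_periods (hg : ∀ k, AlmostPeriodic (g k)) {ε : ℝ} (hε : 0 < ε) :
    ∃ L > 0, ∀ a, ∃ s ∈ Icc a (a + L), ∀ k t, |g k (t + s) - g k t| < ε := by
  by_contra! hfree
  choose a ha using fun n : ℕ ↦ hfree (n + 1) n.cast_add_one_pos
  obtain ⟨u, hu⟩ : ∃ u : ℕ → ℝ, ∀ n, u n = a n + (n + 1) / 2 := ⟨_, fun _ ↦ rfl⟩
  choose v hv using fun k ↦
    (hg k).exists_eventually_forall_abs_sub_lt (hyperfilter ℕ) u (half_pos hε)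
  have hclose := eventually_all.2 hv
  obtain ⟨p, hp⟩ := hclose.exists
  have hlarge : ∀ᶠ n : ℕ in (hyperfilter ℕ : Filter ℕ), 2 * |u p| ≤ n :=
    (tendsto_natCast_atTop_atTop.mono_left Nat.hyperfilter_le_atTop).eventually_ge_atTop _
  obtain ⟨n, hn, hpn⟩ := (hclose.and hlarge).exists
  obtain ⟨k, t, hkt⟩ := ha n (u n - u p) ⟨by linarith [le_abs_self (u p), hu n],
    by linarith [neg_abs_le (u p), hu n]⟩
  have hp : |g k t - g k (t - u p + v k)| < ε / 2 := by
    simpa only [sub_add_cancel] using hp k (t - u p)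
  have hn : |g k (t + (u n - u p)) - g k (t - u p + v k)| < ε / 2 := by
    simpa only [sub_add_eq_add_sub, add_sub_assoc] using hn k (t - u p)
  linarith [abs_sub_le (g k (t + (u n - u p))) (g k (t - u p + v k)) (g k t),
    abs_sub_comm (g k t) (g k (t - u p + v k))]

lemma of_common_periods (hg : ∀ k, AlmostPeriodic (g k)) (hf : Continuous f)
    (hperiod : ∀ ε > 0, ∃ δ > 0, ∀ s, (∀ k t, |g k (t + s) - g k t| < δ) →
      ∀ t, |f (t + s) - f t| < ε) :
    AlmostPeriodic f := by
  refine ⟨hf, fun ε hε ↦ ?_⟩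
  obtain ⟨δ, hδ, hδε⟩ := hperiod ε hε
  obtain ⟨L, hL, hcommon⟩ := exists_common_periods hg hδ
  refine ⟨L, hL, fun a ↦ ?_⟩
  obtain ⟨s, hs, hst⟩ := hcommon a
  exact ⟨s, hs, hδε s hst⟩

lemma comp_uniformContinuous (hg : ∀ k, AlmostPeriodic (g k)) {Φ : (ι → ℝ) → ℝ}
    (hΦ : UniformContinuous Φ) : AlmostPeriodic fun t ↦ Φ fun k ↦ g k t := by
  cases nonempty_fintype ι
  refine of_common_periods hg (hΦ.continuous.comp (continuous_pi fun k ↦ (hg k).1)) fun ε hε ↦ ?_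
  obtain ⟨δ, hδ, hunif⟩ := Metric.uniformContinuous_iff.1 hΦ ε hε
  exact ⟨δ, hδ, fun s hs t ↦ hunif ((dist_pi_lt_iff hδ).2 fun k ↦ hs k t)⟩

lemma exists_hasRecurrentIntervals (hg : ∀ k, AlmostPeriodic (g k)) (hpos : JointlyPositive g) :
    ∃ L > 0, ∃ ρ > 0, ∃ δ > 0, HasRecurrentIntervals {t | ∀ k, δ ≤ g k t} L ρ := by
  obtain ⟨t₀, ht₀⟩ := hpos.2
  have hsmall : ∀ᶠ δ : ℝ in 𝓝[>] 0, ∀ k, 2 * δ < g k t₀ := eventually_all.2 fun k ↦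
    Tendsto.eventually_lt_const (by simpa using ht₀ k)
      (tendsto_nhdsWithin_of_tendsto_nhds (tendsto_id.const_mul 2))
  obtain ⟨δ, hδt₀, hδ⟩ := (hsmall.and self_mem_nhdsWithin).exists
  have hnear : ∀ᶠ t in 𝓝 t₀, ∀ k, 2 * δ < g k t := eventually_all.2 fun k ↦
    (hg k).1.continuousAt.eventually (lt_mem_nhds (hδt₀ k))
  obtain ⟨ρ, hρ, hnear⟩ := Metric.eventually_nhds_iff.1 hnear
  obtain ⟨L, hL, hperiod⟩ := exists_common_periods hg hδ
  refine ⟨L, hL, ρ / 2, by positivity, δ, hδ, fun T ↦ ?_⟩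
  obtain ⟨s, hs, hst⟩ := hperiod (T - t₀)
  refine ⟨t₀ + s, ⟨by linarith [hs.1], by linarith [hs.2]⟩, fun t ht k ↦ ?_⟩
  have hlower : 2 * δ < g k (t - s) := hnear (by
    rw [Real.dist_eq, abs_lt]; constructor <;> linarith [ht.1, ht.2]) k
  have hclose := hst k (t - s)
  rw [sub_add_cancel, abs_lt] at hclose
  linarith [hclose.1]

end Family

end AlmostPeriodic

lemma JointlyPositive.of_tendstoUniformly_translate {ι α : Type*} [Finite ι] {g G : ι → ℝ → ℝ}
    {U : Ultrafilter α} {u : α → ℝ} (hg : ∀ k, AlmostPeriodic (g k)) (hpos : JointlyPositive g)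
    (hG : ∀ k, TendstoUniformly (fun n t ↦ g k (t + u n)) (G k) U) : JointlyPositive G := by
  refine ⟨fun k t ↦ ge_of_tendsto ((hG k).tendsto_at t) (.of_forall fun n ↦ hpos.1 k _), ?_⟩
  obtain ⟨L, -, ρ, hρ, δ, hδ, hrec⟩ := AlmostPeriodic.exists_hasRecurrentIntervals hg hpos
  choose s hs hsub using fun n ↦ hrec (u n)
  obtain ⟨w, -, hw⟩ := exists_tendsto_of_eventually_mem_Icc (U := U)
    (.of_forall fun n ↦ ⟨by linarith [(hs n).1], by linarith [(hs n).2]⟩ :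
      ∀ᶠ n in U, s n - u n ∈ Icc 0 L)
  refine ⟨w, fun k ↦ hδ.trans_le ?_⟩
  have hcont : Continuous (G k) := ((hg k).of_tendstoUniformly_translate (hG k)).1
  refine ge_of_tendsto ((hG k).tendsto_comp hcont.continuousAt hw) (.of_forall fun n ↦ ?_)
  rw [sub_add_cancel]
  exact hsub n (left_mem_Icc.2 (by linarith)) k

section Systems

/-- Indices of the coefficient functions of a system with `m` equations. Gathering all
coefficients in one finite family lets the results on almost periodic families treat them
simultaneously. -/
inductive CoeffIndex (m : ℕ)
  | d (i : Fin m)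
  | a (i j : Fin m)
  | β (i : Fin m)
  | c (i : Fin m)

/-- The family of all coefficient functions `dᵢ`, `aᵢⱼ`, `βᵢ`, `cᵢ`. -/
def coeffs {m : ℕ} (d : Fin m → ℝ → ℝ) (a : Fin m → Fin m → ℝ → ℝ) (β c : Fin m → ℝ → ℝ) :
    CoeffIndex m → ℝ → ℝ
  | .d i => d i
  | .a i j => a i j
  | .β i => β i
  | .c i => c i

variable {m : ℕ}

instance : Finite (CoeffIndex m) :=
  Finite.of_injective
    (β := Fin m ⊕ (Fin m × Fin m) ⊕ Fin m ⊕ Fin m)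
    (fun
      | .d i => .inl i
      | .a i j => .inr (.inl (i, j))
      | .β i => .inr (.inr (.inl i))
      | .c i => .inr (.inr (.inr i)))
    (fun k l h ↦ by cases k <;> cases l <;> simp_all)

/-- The right-hand side of the system with coefficient family `N` and delays `r`. -/
def field (N : CoeffIndex m → ℝ → ℝ) (r : Fin m → ℝ) (y : ℝ → Fin m → ℝ) (t : ℝ) (i : Fin m) : ℝ :=
  -N (.d i) t * y t i + ∑ j, N (.a i j) t * y t j +
    N (.β i) t * ricker (N (.c i) t) (y (t - r i) i)

lemma field_coeffs (d : Fin m → ℝ → ℝ) (a : Fin m → Fin m → ℝ → ℝ) (β c : Fin m → ℝ → ℝ)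
    (r : Fin m → ℝ) (y : ℝ → Fin m → ℝ) (t : ℝ) (i : Fin m) :
    field (coeffs d a β c) r y t i = rhs d a β c r i t y := by
  simp only [field, coeffs, ricker, rhs, mul_assoc]

lemma continuousOn_field {N : CoeffIndex m → ℝ → ℝ} {r : Fin m → ℝ} {S : Set ℝ}
    {y : ℝ → Fin m → ℝ} {i : Fin m} (hN : ∀ k, Continuous (N k))
    (hy : ∀ j, ContinuousOn (fun t ↦ y t j) S)
    (hdelay : ContinuousOn (fun t ↦ y (t - r i) i) S) :
    ContinuousOn (fun t ↦ field N r y t i) S := by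
  have hcoeff : ∀ k, ContinuousOn (N k) S := fun k ↦ (hN k).continuousOn
  exact (((hcoeff (.d i)).neg.mul (hy i)).add
    (continuousOn_finsetSum _ fun j _ ↦ (hcoeff (.a i j)).mul (hy j))).add
    ((hcoeff (.β i)).mul (hdelay.mul ((hcoeff (.c i)).mul hdelay).neg.rexp))

/-- `y` solves the system at all times in `S` and its components take values in `[M, K]` there. -/
structure IsSolutionIn (N : CoeffIndex m → ℝ → ℝ) (r : Fin m → ℝ) (S : Set ℝ) (M K : ℝ)
    (y : ℝ → Fin m → ℝ) : Prop where
  hasDerivAt : ∀ t ∈ S, ∀ i, HasDerivAt (fun u ↦ y u i) (field N r y t i) t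
  mem_Icc : ∀ t ∈ S, ∀ i, y t i ∈ Icc M K

lemma IsSolutionIn.mono {N : CoeffIndex m → ℝ → ℝ} {r : Fin m → ℝ} {S S' : Set ℝ}
    {M M' K K' : ℝ} {y : ℝ → Fin m → ℝ} (hy : IsSolutionIn N r S M K y) (hS : S' ⊆ S)
    (hM : M' ≤ M) (hK : K ≤ K') : IsSolutionIn N r S' M' K' y :=
  ⟨fun t ht ↦ hy.hasDerivAt t (hS ht), fun t ht i ↦ Icc_subset_Icc hM hK (hy.mem_Icc t (hS ht) i)⟩

/-- The conditions on delays and coefficients under which bounded positive solutions attract each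
other. They are stated so as to pass to limits of translates of the coefficients. -/
structure Admissible (r : Fin m → ℝ) (N : CoeffIndex m → ℝ → ℝ) : Prop where
  delay_pos : ∀ i, 0 < r i
  almostPeriodic : ∀ k, AlmostPeriodic (N k)
  a_nonneg : ∀ i j t, 0 ≤ N (.a i j) t
  jointlyPositive_β : JointlyPositive fun i ↦ N (.β i)
  c_ge : ∃ c₀ > 0, ∀ i t, c₀ ≤ N (.c i) t
  birth_le : ∃ η > 0, ∀ i t,
    N (.β i) t * Real.exp (∫ s in (t - r i)..t, N (.d i) s) * Real.exp (-1) ≤ 1 / r i - η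

/-- Uniform constants for the coefficients of an admissible system. -/
structure Bounds (r : Fin m → ℝ) (N : CoeffIndex m → ℝ → ℝ) where
  (R D c₀ η L ρ δ : ℝ)
  R_pos : 0 < R
  D_pos : 0 < D
  c₀_pos : 0 < c₀
  η_pos : 0 < η
  L_pos : 0 < L
  ρ_pos : 0 < ρ
  δ_pos : 0 < δ
  delay_le : ∀ i, r i ≤ R
  inv_delay_le : ∀ i, 1 / r i ≤ D
  abs_le : ∀ k t, |N k t| ≤ D
  c₀_le : ∀ i t, c₀ ≤ N (.c i) t
  birth_le : ∀ i t,
    N (.β i) t * Real.exp (∫ s in (t - r i)..t, N (.d i) s) * Real.exp (-1) ≤ 1 / r i - η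
  recurrent : HasRecurrentIntervals {t | ∀ i, δ ≤ N (.β i) t} L ρ

namespace Admissible

variable {r : Fin m → ℝ} {N : CoeffIndex m → ℝ → ℝ}

lemma continuous (hN : Admissible r N) (k : CoeffIndex m) : Continuous (N k) :=
  (hN.almostPeriodic k).1

lemma nonempty_bounds (hN : Admissible r N) : Nonempty (Bounds r N) := by
  obtain ⟨c₀, hc₀, hc⟩ := hN.c_ge
  obtain ⟨η, hη, hbirth⟩ := hN.birth_le
  obtain ⟨L, hL, ρ, hρ, δ, hδ, hrec⟩ :=
    AlmostPeriodic.exists_hasRecurrentIntervals (fun i ↦ hN.almostPeriodic (.β i))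
      hN.jointlyPositive_β
  choose B hB using fun k ↦ (hN.almostPeriodic k).exists_abs_le
  obtain ⟨R, hR⟩ := Finite.exists_le r
  obtain ⟨D₁, hD₁⟩ := Finite.exists_le fun i ↦ 1 / r i
  obtain ⟨D₂, hD₂⟩ := Finite.exists_le B
  exact ⟨{
    R := max R 1, D := max (max D₁ D₂) 1, c₀, η, L, ρ, δ
    R_pos := by positivity
    D_pos := by positivity
    c₀_pos := hc₀
    η_pos := hη
    L_pos := hL
    ρ_pos := hρ
    δ_pos := hδ
    delay_le := fun i ↦ (hR i).trans (le_max_left _ _)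
    inv_delay_le := fun i ↦ (hD₁ i).trans ((le_max_left _ _).trans (le_max_left _ _))
    abs_le := fun k t ↦
      (hB k t).trans ((hD₂ k).trans ((le_max_right _ _).trans (le_max_left _ _)))
    c₀_le := hc
    birth_le := hbirth
    recurrent := hrec }⟩

end Admissible

namespace Bounds

variable {r : Fin m → ℝ} {N : CoeffIndex m → ℝ → ℝ} {x y : ℝ → Fin m → ℝ} {t B K : ℝ} {i : Fin m}

lemma c_nonneg (C : Bounds r N) (i : Fin m) (t : ℝ) : 0 ≤ N (.c i) t :=
  C.c₀_pos.le.trans (C.c₀_le i t)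

lemma abs_field_sub_le (C : Bounds r N) (hx : 0 ≤ x (t - r i) i) (hy : 0 ≤ y (t - r i) i)
    (hnow : ∀ j, |x t j - y t j| ≤ B) (hpast : |x (t - r i) i - y (t - r i) i| ≤ B) :
    |field N r x t i - field N r y t i| ≤ (m + 2) * (C.D * B) := by
  have hmul : ∀ k v, |v| ≤ B → |N k t * v| ≤ C.D * B := fun k v hv ↦ by
    rw [abs_mul]
    exact mul_le_mul (C.abs_le k t) hv (abs_nonneg v) C.D_pos.le
  have hsum : |∑ j, N (.a i j) t * (x t j - y t j)| ≤ m * (C.D * B) := by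
    calc |∑ j, N (.a i j) t * (x t j - y t j)|
        ≤ ∑ j, |N (.a i j) t * (x t j - y t j)| := Finset.abs_sum_le_sum_abs _ _
      _ ≤ ∑ _j : Fin m, C.D * B := Finset.sum_le_sum fun j _ ↦ hmul _ _ (hnow j)
      _ = m * (C.D * B) := by simp
  have hdecay : |-(N (.d i) t * (x t i - y t i))| ≤ C.D * B := by
    rw [abs_neg]; exact hmul _ _ (hnow i)
  have hbirth : |N (.β i) t *
      (ricker (N (.c i) t) (x (t - r i) i) - ricker (N (.c i) t) (y (t - r i) i))| ≤ C.D * B :=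
    hmul _ _ ((abs_ricker_sub_le (C.c_nonneg i t) hx hy).trans hpast)
  calc |field N r x t i - field N r y t i|
      = |-(N (.d i) t * (x t i - y t i)) + ∑ j, N (.a i j) t * (x t j - y t j) + N (.β i) t *
          (ricker (N (.c i) t) (x (t - r i) i) - ricker (N (.c i) t) (y (t - r i) i))| := by
        simp only [field, mul_sub, Finset.sum_sub_distrib]
        ring_nf
    _ ≤ _ := abs_add_three _ _ _
    _ ≤ C.D * B + m * (C.D * B) + C.D * B := add_le_add (add_le_add hdecay hsum) hbirth
    _ = (m + 2) * (C.D * B) := by ring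

lemma abs_field_le (C : Bounds r N) (hnow : ∀ j, y t j ∈ Icc 0 K)
    (hpast : y (t - r i) i ∈ Icc 0 K) : |field N r y t i| ≤ (m + 2) * (C.D * K) := by
  have habs : ∀ v ∈ Icc 0 K, |v - 0| ≤ K := fun v hv ↦ by
    rw [sub_zero, abs_of_nonneg hv.1]; exact hv.2
  have hzero : field N r (fun _ _ ↦ 0) t i = 0 := by simp [field, ricker]
  simpa only [hzero, sub_zero] using C.abs_field_sub_le (y := fun _ _ ↦ 0) hpast.1 le_rfl
    (fun j ↦ habs _ (hnow j)) (habs _ hpast)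

end Bounds

end Systems

section Contraction

variable {m : ℕ} {r : Fin m → ℝ} {N : CoeffIndex m → ℝ → ℝ} {x y : ℝ → Fin m → ℝ}
  {lam M K T₀ P t : ℝ}

/-- The right-hand side with the terms `-(dᵢ + 1/rᵢ) yᵢ` split off. -/
def drive (N : CoeffIndex m → ℝ → ℝ) (r : Fin m → ℝ) (y : ℝ → Fin m → ℝ) (t : ℝ) (i : Fin m) : ℝ :=
  1 / r i * y t i + ∑ j, N (.a i j) t * y t j + N (.β i) t * ricker (N (.c i) t) (y (t - r i) i)

/-- The gap between `y` and the multiple `lam • x`. -/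
def gap (lam : ℝ) (x y : ℝ → Fin m → ℝ) (t : ℝ) (i : Fin m) : ℝ := y t i - lam * x t i

/-- The inhomogeneity in the linear equation `z' = driveGap - (dᵢ + 1/rᵢ) z` solved by the gap `z`
of two solutions. -/
def driveGap (N : CoeffIndex m → ℝ → ℝ) (r : Fin m → ℝ) (lam : ℝ) (x y : ℝ → Fin m → ℝ) (t : ℝ)
    (i : Fin m) : ℝ :=
  drive N r y t i - lam * drive N r x t i

/-- On `S`, the function `y` lies strictly above `lam • x` in the exponential order with rates
`dᵢ + 1/rᵢ`, where monotonicity of the weighted gap is expressed through its derivative. -/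
def IsAboveOn (N : CoeffIndex m → ℝ → ℝ) (r : Fin m → ℝ) (lam : ℝ) (x y : ℝ → Fin m → ℝ)
    (S : Set ℝ) : Prop :=
  ∀ t ∈ S, ∀ i, 0 < gap lam x y t i ∧ 0 < driveGap N r lam x y t i

lemma hasDerivAt_gap (hx : IsSolutionIn N r (Ici T₀) M K x) (hy : IsSolutionIn N r (Ici T₀) M K y)
    (lam : ℝ) (ht : T₀ ≤ t) (i : Fin m) :
    HasDerivAt (fun u ↦ gap lam x y u i)
      (driveGap N r lam x y t i - (N (.d i) t + 1 / r i) * gap lam x y t i) t := by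
  refine ((hy.hasDerivAt t ht i).sub ((hx.hasDerivAt t ht i).const_mul lam)).congr_deriv ?_
  simp only [field, driveGap, drive, gap]
  ring

lemma continuousOn_gap (hx : IsSolutionIn N r (Ici T₀) M K x)
    (hy : IsSolutionIn N r (Ici T₀) M K y) (lam : ℝ) (i : Fin m) :
    ContinuousOn (fun u ↦ gap lam x y u i) (Ici T₀) :=
  fun _ ht ↦ (hasDerivAt_gap hx hy lam ht i).continuousAt.continuousWithinAt

/-- The exponent of the integrating factor for the decay rate `dᵢ + 1/rᵢ`. -/
def decayExponent (N : CoeffIndex m → ℝ → ℝ) (r : Fin m → ℝ) (i : Fin m) (t : ℝ) : ℝ :=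
  (∫ s in (0 : ℝ)..t, N (.d i) s) + 1 / r i * t

lemma hasDerivAt_decayExponent (hN : Admissible r N) (i : Fin m) (t : ℝ) :
    HasDerivAt (decayExponent N r i) (N (.d i) t + 1 / r i) t :=
  ((hN.continuous (.d i)).integral_hasStrictDerivAt 0 t).hasDerivAt.add
    (by simpa using (hasDerivAt_id t).const_mul (1 / r i))

lemma decayExponent_sub_delay (hN : Admissible r N) (i : Fin m) (t : ℝ) :
    decayExponent N r i t =
      (∫ s in (t - r i)..t, N (.d i) s) + 1 + decayExponent N r i (t - r i) := by
  have hint (p q : ℝ) : IntervalIntegrable (N (.d i)) volume p q :=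
    (hN.continuous (.d i)).intervalIntegrable p q
  have hr := (hN.delay_pos i).ne'
  rw [decayExponent, decayExponent,
    ← intervalIntegral.integral_add_adjacent_intervals (hint 0 (t - r i)) (hint (t - r i) t)]
  field_simp
  ring

lemma continuousOn_drive (C : Bounds r N) (hN : Admissible r N)
    (hx : IsSolutionIn N r (Ici T₀) M K x) (i : Fin m) :
    ContinuousOn (fun t ↦ drive N r x t i) (Ici (T₀ + C.R)) := by
  have hcont : ∀ j, ContinuousOn (fun t ↦ x t j) (Ici T₀) := fun j t ht ↦
    (hx.hasDerivAt t ht j).continuousAt.continuousWithinAt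
  have hcur : ∀ j, ContinuousOn (fun t ↦ x t j) (Ici (T₀ + C.R)) := fun j ↦
    (hcont j).mono (Ici_subset_Ici.2 (by linarith [C.R_pos]))
  have hdelay : ContinuousOn (fun t ↦ x (t - r i) i) (Ici (T₀ + C.R)) :=
    (hcont i).comp (by fun_prop) fun t ht ↦ by
      rw [mem_Ici] at *
      linarith [C.delay_le i]
  have hrate : ContinuousOn (fun t ↦ N (.d i) t + 1 / r i) (Ici (T₀ + C.R)) :=
    (hN.continuous _).continuousOn.add continuousOn_const
  refine ((continuousOn_field hN.continuous hcur hdelay).add (hrate.mul (hcur i))).congr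
    fun t _ ↦ ?_
  simp only [drive, field, Pi.add_apply, Pi.mul_apply]
  ring

lemma gap_mul_exp_le_gap_mul_exp (hN : Admissible r N) (hx : IsSolutionIn N r (Ici T₀) M K x)
    (hy : IsSolutionIn N r (Ici T₀) M K y) {p q : ℝ} (hp : T₀ ≤ p) (hpq : p ≤ q) {i : Fin m}
    (hdrive : ∀ t ∈ Ioo p q, 0 ≤ driveGap N r lam x y t i) :
    gap lam x y p i * Real.exp (decayExponent N r i p) ≤
      gap lam x y q i * Real.exp (decayExponent N r i q) := by
  refine mul_exp_le_mul_exp hpq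
    ((continuousOn_gap hx hy lam i).mono fun t ht ↦ hp.trans ht.1)
    (fun t ht ↦ hasDerivAt_gap hx hy lam (hp.trans ht.1.le) i) (hasDerivAt_decayExponent hN i)
    fun t ht ↦ ?_
  rw [sub_add_cancel]
  exact hdrive t ht

lemma gap_delay_le (hN : Admissible r N) {i : Fin m}
    (hmono : gap lam x y (t - r i) i * Real.exp (decayExponent N r i (t - r i)) ≤
      gap lam x y t i * Real.exp (decayExponent N r i t)) :
    gap lam x y (t - r i) i ≤
      gap lam x y t i * Real.exp ((∫ s in (t - r i)..t, N (.d i) s) + 1) := by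
  rw [decayExponent_sub_delay hN i t, Real.exp_add _ (decayExponent N r i (t - r i)),
    ← mul_assoc] at hmono
  exact le_of_mul_le_mul_right hmono (Real.exp_pos _)

/-- The constant by which the Ricker function is strictly sublinear on `[M, K]`. -/
def Bounds.sublinearity (C : Bounds r N) (M K : ℝ) : ℝ := C.c₀ * M ^ 2 * Real.exp (-(C.D * K))

lemma Bounds.sublinearity_pos (C : Bounds r N) (hM : 0 < M) : 0 < C.sublinearity M K :=
  mul_pos (mul_pos C.c₀_pos (pow_pos hM 2)) (Real.exp_pos _)

lemma Bounds.β_mul_exp_neg_two_mul_le (C : Bounds r N) (hN : Admissible r N) {i : Fin m} {z z' : ℝ}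
    (hz : 0 ≤ z) (hz' : z' ≤ z * Real.exp ((∫ s in (t - r i)..t, N (.d i) s) + 1)) :
    N (.β i) t * (Real.exp (-2) * z') ≤ (1 / r i - C.η) * z := by
  have hexp : Real.exp (-2) * Real.exp 1 = Real.exp (-1) := by rw [← Real.exp_add]; norm_num
  calc N (.β i) t * (Real.exp (-2) * z')
      ≤ N (.β i) t *
          (Real.exp (-2) * (z * Real.exp ((∫ s in (t - r i)..t, N (.d i) s) + 1))) := by
        have := hN.jointlyPositive_β.1 i t
        gcongr
    _ = N (.β i) t * Real.exp (∫ s in (t - r i)..t, N (.d i) s) * Real.exp (-1) * z := by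
        rw [Real.exp_add, ← hexp]; ring
    _ ≤ (1 / r i - C.η) * z := mul_le_mul_of_nonneg_right (C.birth_le i t) hz

-- The delayed term can decrease the drive by at most `e⁻² βᵢ z(t - rᵢ) ≤ (1/rᵢ - η) z(t)`.
lemma le_driveGap (C : Bounds r N) (hN : Admissible r N) (hM : 0 < M) (hlam : lam ∈ Icc (0 : ℝ) 1)
    {i : Fin m} (hx : x (t - r i) i ∈ Icc M K) (hgap : ∀ j, 0 ≤ gap lam x y t j)
    (hdelay_nonneg : 0 ≤ gap lam x y (t - r i) i)
    (hdelay_le : gap lam x y (t - r i) i ≤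
      gap lam x y t i * Real.exp ((∫ s in (t - r i)..t, N (.d i) s) + 1)) :
    C.η * gap lam x y t i + C.sublinearity M K * (lam * (1 - lam)) * N (.β i) t ≤
      driveGap N r lam x y t i := by
  have hcoupling : 0 ≤ ∑ j, N (.a i j) t * gap lam x y t j :=
    Finset.sum_nonneg fun j _ ↦ mul_nonneg (hN.a_nonneg i j t) (hgap j)
  have hslope := neg_exp_neg_two_mul_sub_le_ricker_sub (c := N (.c i) t)
    (sub_nonneg.1 hdelay_nonneg)
  have hsublinear := mul_le_ricker_mul_sub_mul_ricker C.c₀_pos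
    ⟨C.c₀_le i t, (le_abs_self _).trans (C.abs_le (.c i) t)⟩ hM hx hlam
  have hbirth := C.β_mul_exp_neg_two_mul_le hN (hgap i) hdelay_le
  have hricker := mul_le_mul_of_nonneg_left (add_le_add hslope hsublinear)
    (hN.jointlyPositive_β.1 i t)
  have hexpand : driveGap N r lam x y t i = 1 / r i * gap lam x y t i
      + ∑ j, N (.a i j) t * gap lam x y t j
      + N (.β i) t * (ricker (N (.c i) t) (y (t - r i) i)
        - lam * ricker (N (.c i) t) (x (t - r i) i)) := by
    simp only [driveGap, drive, gap, mul_sub, Finset.sum_sub_distrib, mul_add, Finset.mul_sum,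
      mul_left_comm lam]
    ring
  rw [hexpand, Bounds.sublinearity]
  simp only [gap] at *
  linarith

lemma gap_pos_and_le_driveGap_of_forall_Ico (C : Bounds r N) (hN : Admissible r N) (hM : 0 < M)
    (hx : IsSolutionIn N r (Ici T₀) M K x) (hy : IsSolutionIn N r (Ici T₀) M K y)
    (hlam : lam ∈ Icc (0 : ℝ) 1) (hP : T₀ ≤ P) (hgap : ∀ i, 0 < gap lam x y P i)
    (ht : P + C.R ≤ t) (hdrive : ∀ s ∈ Ico P t, ∀ i, 0 < driveGap N r lam x y s i) (i : Fin m) :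
    0 < gap lam x y t i ∧
      C.η * gap lam x y t i + C.sublinearity M K * (lam * (1 - lam)) * N (.β i) t ≤
        driveGap N r lam x y t i := by
  have hR := C.R_pos
  have hmono : ∀ j, ∀ p q, P ≤ p → p ≤ q → q ≤ t →
      gap lam x y p j * Real.exp (decayExponent N r j p) ≤
        gap lam x y q j * Real.exp (decayExponent N r j q) := fun j p q hp hpq hq ↦
    gap_mul_exp_le_gap_mul_exp hN hx hy (hP.trans hp) hpq fun s hs ↦
      (hdrive s ⟨hp.trans hs.1.le, hs.2.trans_le hq⟩ j).le
  have hpos : ∀ j q, P ≤ q → q ≤ t → 0 < gap lam x y q j := fun j q hq hqt ↦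
    pos_of_mul_pos_left
      ((mul_pos (hgap j) (Real.exp_pos _)).trans_le (hmono j P q le_rfl hq hqt))
      (Real.exp_pos _).le
  have hdelay : P ≤ t - r i := by linarith [C.delay_le i]
  have hdelay_lt : t - r i ≤ t := by linarith [hN.delay_pos i]
  exact ⟨hpos i t (by linarith) le_rfl, le_driveGap C hN hM hlam
    (hx.mem_Icc _ (hP.trans hdelay) i) (fun j ↦ (hpos j t (by linarith) le_rfl).le)
    (hpos i _ hdelay hdelay_lt).le (gap_delay_le hN (hmono i _ _ hdelay hdelay_lt le_rfl))⟩

lemma IsAboveOn.gap_pos_and_le_driveGap (C : Bounds r N) (hN : Admissible r N) (hM : 0 < M)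
    (hx : IsSolutionIn N r (Ici T₀) M K x) (hy : IsSolutionIn N r (Ici T₀) M K y)
    (hlam : lam ∈ Icc (0 : ℝ) 1) (hP : T₀ + C.R ≤ P)
    (habove : IsAboveOn N r lam x y (Icc P (P + C.R))) (ht : P + C.R ≤ t) (i : Fin m) :
    0 < gap lam x y t i ∧
      C.η * gap lam x y t i + C.sublinearity M K * (lam * (1 - lam)) * N (.β i) t ≤
        driveGap N r lam x y t i := by
  have hR := C.R_pos
  have hgapP : ∀ j, 0 < gap lam x y P j := fun j ↦
    (habove P (left_mem_Icc.2 (by linarith)) j).1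
  have hdrive : ∀ s, P ≤ s → ∀ j, 0 < driveGap N r lam x y s j := by
    refine forall_pos_of_forall_Ico_pos (F := fun j s ↦ driveGap N r lam x y s j)
      (fun j ↦ ?_) fun s hs hbefore j ↦ ?_
    · exact ((continuousOn_drive C hN hy j).sub
        (continuousOn_const.mul (continuousOn_drive C hN hx j))).mono (Ici_subset_Ici.2 hP)
    · rcases le_total s (P + C.R) with hsR | hsR
      · exact (habove s ⟨hs, hsR⟩ j).2
      · obtain ⟨hpos, hle⟩ := gap_pos_and_le_driveGap_of_forall_Ico C hN hM hx hy hlam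
          (by linarith) hgapP hsR hbefore j
        refine (mul_pos C.η_pos hpos).trans_le (le_trans (le_add_of_nonneg_right ?_) hle)
        exact mul_nonneg (mul_nonneg (C.sublinearity_pos hM).le
          (mul_nonneg hlam.1 (sub_nonneg.2 hlam.2))) (hN.jointlyPositive_β.1 j s)
  exact gap_pos_and_le_driveGap_of_forall_Ico C hN hM hx hy hlam (by linarith) hgapP ht
    (fun s hs ↦ hdrive s hs.1) i

lemma drive_le (C : Bounds r N) (hM : 0 < M)
    (hx : IsSolutionIn N r (Ici T₀) M K x) (ht : T₀ + C.R ≤ t) (i : Fin m) :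
    drive N r x t i ≤ (m + 2) * (C.D * K) := by
  have hmem := hx.mem_Icc t (by rw [mem_Ici]; linarith [C.R_pos])
  have hdelay := hx.mem_Icc (t - r i) (by rw [mem_Ici]; linarith [C.delay_le i]) i
  have hle := fun k ↦ (le_abs_self _).trans (C.abs_le k t)
  have hD := C.D_pos.le
  have hcoupling : ∑ j, N (.a i j) t * x t j ≤ m * (C.D * K) := by
    calc ∑ j, N (.a i j) t * x t j ≤ ∑ _j : Fin m, C.D * K := Finset.sum_le_sum fun j _ ↦
          mul_le_mul (hle _) (hmem j).2 (hM.le.trans (hmem j).1) hD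
      _ = m * (C.D * K) := by simp
  have hbirth : N (.β i) t * ricker (N (.c i) t) (x (t - r i) i) ≤ C.D * K :=
    mul_le_mul (hle _) ((ricker_le_self (C.c_nonneg i t)
      (hM.le.trans hdelay.1)).trans hdelay.2) (ricker_nonneg (hM.le.trans hdelay.1)) hD
  have hself : 1 / r i * x t i ≤ C.D * K :=
    mul_le_mul (C.inv_delay_le i) (hmem i).2 (hM.le.trans (hmem i).1) hD
  rw [drive]
  linarith

lemma le_drive (C : Bounds r N) (hN : Admissible r N) (hM : 0 < M)
    (hx : IsSolutionIn N r (Ici T₀) M K x) (ht : T₀ + C.R ≤ t) (i : Fin m) :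
    M / C.R ≤ drive N r x t i := by
  have hmem := hx.mem_Icc t (by rw [mem_Ici]; linarith [C.R_pos])
  have hdelay := hx.mem_Icc (t - r i) (by rw [mem_Ici]; linarith [C.delay_le i]) i
  have hself : M / C.R ≤ 1 / r i * x t i := by
    rw [div_eq_mul_one_div, mul_comm]
    exact mul_le_mul (one_div_le_one_div_of_le (hN.delay_pos i) (C.delay_le i)) (hmem i).1 hM.le
      (one_div_pos.2 (hN.delay_pos i)).le
  have hcoupling : 0 ≤ ∑ j, N (.a i j) t * x t j :=
    Finset.sum_nonneg fun j _ ↦ mul_nonneg (hN.a_nonneg i j t) (hM.le.trans (hmem j).1)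
  have hbirth : 0 ≤ N (.β i) t * ricker (N (.c i) t) (x (t - r i) i) :=
    mul_nonneg (hN.jointlyPositive_β.1 i t) (ricker_nonneg (hM.le.trans hdelay.1))
  rw [drive]
  linarith

/-- A time span within which every `βᵢ` has been at least `δ` during an interval of length `ρ`. -/
def Bounds.span (C : Bounds r N) : ℝ := C.R + C.L + C.ρ

/-- The relative size to which every gap grows during one time span. -/
def Bounds.gain (C : Bounds r N) (M K : ℝ) : ℝ :=
  C.sublinearity M K * C.δ * C.ρ * Real.exp (-(2 * C.D * C.span))

lemma Bounds.span_pos (C : Bounds r N) : 0 < C.span :=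
  add_pos (add_pos C.R_pos C.L_pos) C.ρ_pos

lemma Bounds.gain_pos (C : Bounds r N) (hM : 0 < M) : 0 < C.gain M K :=
  mul_pos (mul_pos (mul_pos (C.sublinearity_pos hM) C.δ_pos) C.ρ_pos) (Real.exp_pos _)

lemma IsAboveOn.le_deriv_gap_add (C : Bounds r N) (hN : Admissible r N) (hM : 0 < M)
    (hx : IsSolutionIn N r (Ici T₀) M K x) (hy : IsSolutionIn N r (Ici T₀) M K y)
    (hlam : lam ∈ Icc (0 : ℝ) 1) (hP : T₀ + C.R ≤ P)
    (habove : IsAboveOn N r lam x y (Icc P (P + C.R))) (ht : P + C.R ≤ t) (i : Fin m) :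
    C.sublinearity M K * (lam * (1 - lam)) * N (.β i) t ≤
      driveGap N r lam x y t i - (N (.d i) t + 1 / r i) * gap lam x y t i
        + 2 * C.D * gap lam x y t i := by
  obtain ⟨hpos, hle⟩ := habove.gap_pos_and_le_driveGap C hN hM hx hy hlam hP ht i
  have hrate : 0 ≤ (2 * C.D - (N (.d i) t + 1 / r i)) * gap lam x y t i :=
    mul_nonneg (by linarith [C.inv_delay_le i, le_abs_self (N (.d i) t), C.abs_le (.d i) t]) hpos.le
  linarith [mul_pos C.η_pos hpos]

lemma IsAboveOn.gain_mul_le_gap (C : Bounds r N) (hN : Admissible r N) (hM : 0 < M)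
    (hx : IsSolutionIn N r (Ici T₀) M K x) (hy : IsSolutionIn N r (Ici T₀) M K y)
    (hlam : lam ∈ Icc (0 : ℝ) 1) (hP : T₀ + C.R ≤ P)
    (habove : IsAboveOn N r lam x y (Icc P (P + C.R)))
    (ht : t ∈ Icc (P + C.span) (P + C.span + C.R)) (i : Fin m) :
    C.gain M K * (lam * (1 - lam)) ≤ gap lam x y t i := by
  obtain ⟨s, ⟨hPs, hsL⟩, hβ⟩ := C.recurrent (P + C.R)
  have hspan : C.span = C.R + C.L + C.ρ := rfl
  have hT₀s : T₀ ≤ s := by linarith [C.R_pos]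
  have hcoef : 0 ≤ C.sublinearity M K * (lam * (1 - lam)) :=
    mul_nonneg (C.sublinearity_pos hM).le (mul_nonneg hlam.1 (sub_nonneg.2 hlam.2))
  have hgrowth := fun u (hu : s < u) ↦
    habove.le_deriv_gap_add C hN hM hx hy hlam hP (hPs.trans hu.le) i
  have hgap_s := (habove.gap_pos_and_le_driveGap C hN hM hx hy hlam hP hPs i).1
  have hlower := mul_exp_neg_le_of_le_deriv_add_mul (mul_nonneg zero_le_two C.D_pos.le)
    (mul_nonneg hcoef C.δ_pos.le) C.ρ_pos.le (by linarith [ht.1] : s + C.ρ ≤ t)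
    ((continuousOn_gap hx hy lam i).mono fun u hu ↦ hT₀s.trans hu.1)
    (fun u hu ↦ hasDerivAt_gap hx hy lam (hT₀s.trans hu.1.le) i) hgap_s.le
    (fun u hu ↦ (mul_le_mul_of_nonneg_left (hβ (Ioo_subset_Icc_self hu) i) hcoef).trans
      (hgrowth u hu.1))
    (fun u hu ↦ (mul_nonneg hcoef (hN.jointlyPositive_β.1 i u)).trans (hgrowth u hu.1))
  refine le_trans ?_ hlower
  rw [Bounds.gain]
  calc C.sublinearity M K * C.δ * C.ρ * Real.exp (-(2 * C.D * C.span)) * (lam * (1 - lam))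
      = C.sublinearity M K * (lam * (1 - lam)) * C.δ * C.ρ * Real.exp (-(2 * C.D * C.span)) := by
        ring
    _ ≤ C.sublinearity M K * (lam * (1 - lam)) * C.δ * C.ρ * Real.exp (-(2 * C.D * (t - s))) := by
        have := C.D_pos
        refine mul_le_mul_of_nonneg_left ?_
          (mul_nonneg (mul_nonneg hcoef C.δ_pos.le) C.ρ_pos.le)
        gcongr
        linarith [ht.2]

/-- An admissible step size for raising the factor `lam` once per time span. -/
structure Bounds.IsStep (C : Bounds r N) (M K θ : ℝ) : Prop where
  pos : 0 < θ
  lt_one : θ < 1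
  mul_lt_gain : θ * K < C.gain M K
  mul_lt_η_mul_gain : θ * ((m + 2) * (C.D * K)) < C.η * C.gain M K

lemma Bounds.exists_isStep (C : Bounds r N) (hM : 0 < M) : ∃ θ, C.IsStep M K θ := by
  obtain ⟨θ, hθ₀, hθ₁, hgain, hη⟩ := exists_pos_lt_one_mul_lt (C.gain_pos hM (K := K))
    (mul_pos C.η_pos (C.gain_pos hM)) K ((m + 2) * (C.D * K))
  exact ⟨θ, hθ₀, hθ₁, hgain, hη⟩

lemma IsAboveOn.raise (C : Bounds r N) (hN : Admissible r N) (hM : 0 < M)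
    (hx : IsSolutionIn N r (Ici T₀) M K x) (hy : IsSolutionIn N r (Ici T₀) M K y)
    (hlam : lam ∈ Ioo (0 : ℝ) 1) (hP : T₀ + C.R ≤ P)
    (habove : IsAboveOn N r lam x y (Icc P (P + C.R))) {θ : ℝ} (hθ : C.IsStep M K θ) :
    IsAboveOn N r (lam + θ * (lam * (1 - lam))) x y (Icc (P + C.span) (P + C.span + C.R)) := by
  intro t ht i
  have hlam' := Ioo_subset_Icc_self hlam
  have hq : 0 < lam * (1 - lam) := mul_pos hlam.1 (sub_pos.2 hlam.2)
  have hspan : C.span = C.R + C.L + C.ρ := rfl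
  have hPt : P + C.R ≤ t := by linarith [ht.1, C.L_pos, C.ρ_pos]
  have hgap := habove.gain_mul_le_gap C hN hM hx hy hlam' hP ht i
  have hdrive := (habove.gap_pos_and_le_driveGap C hN hM hx hy hlam' hP hPt i).2
  have hxK : x t i ≤ K := (hx.mem_Icc t (by rw [mem_Ici]; linarith [C.R_pos]) i).2
  have hdrive_le := drive_le C hM hx (by linarith [C.R_pos]) i (t := t)
  have hsublinear := mul_nonneg (mul_nonneg (C.sublinearity_pos hM (K := K)).le hq.le)
    (hN.jointlyPositive_β.1 i t)
  constructor
  · have := mul_lt_mul_of_pos_right hθ.mul_lt_gain hq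
    have := mul_le_mul_of_nonneg_left hxK (mul_pos hθ.pos hq).le
    simp only [gap] at *
    linarith
  · have := mul_lt_mul_of_pos_right hθ.mul_lt_η_mul_gain hq
    have := mul_le_mul_of_nonneg_left hdrive_le (mul_pos hθ.pos hq).le
    have := mul_le_mul_of_nonneg_left hgap C.η_pos.le
    simp only [driveGap] at *
    linarith

lemma exists_isAboveOn (C : Bounds r N) (hM : 0 < M) (K : ℝ) (hN : Admissible r N) :
    ∃ lam ∈ Ioo (0 : ℝ) 1, ∀ x y T₀, IsSolutionIn N r (Ici T₀) M K x →
      IsSolutionIn N r (Ici T₀) M K y →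
        IsAboveOn N r lam x y (Icc (T₀ + C.R) (T₀ + C.R + C.R)) := by
  obtain ⟨lam, hlam₀, hlam₁, hK, hDK⟩ := exists_pos_lt_one_mul_lt hM (div_pos hM C.R_pos) K
    ((m + 2) * (C.D * K))
  refine ⟨lam, ⟨hlam₀, hlam₁⟩, fun x y T₀ hx hy t ht i ↦ ?_⟩
  have htT₀ : t ∈ Ici T₀ := by rw [mem_Ici]; linarith [ht.1, C.R_pos]
  constructor
  · have := mul_le_mul_of_nonneg_left (hx.mem_Icc t htT₀ i).2 hlam₀.le
    rw [gap]
    linarith [(hy.mem_Icc t htT₀ i).1]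
  · have := mul_le_mul_of_nonneg_left (drive_le C hM hx ht.1 i) hlam₀.le
    rw [driveGap]
    linarith [le_drive C hN hM hy ht.1 i]

lemma exists_isAboveOn_one_sub_le_pow (C : Bounds r N) (hN : Admissible r N) (hM : 0 < M)
    (hx : IsSolutionIn N r (Ici T₀) M K x) (hy : IsSolutionIn N r (Ici T₀) M K y)
    {lam₀ θ : ℝ} (hlam₀ : lam₀ ∈ Ioo (0 : ℝ) 1) (hθ : C.IsStep M K θ)
    (habove : IsAboveOn N r lam₀ x y (Icc (T₀ + C.R) (T₀ + C.R + C.R))) (n : ℕ) :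
    ∃ lam, lam₀ ≤ lam ∧ lam < 1 ∧ 1 - lam ≤ (1 - θ * lam₀) ^ n ∧
      IsAboveOn N r lam x y (Icc (T₀ + C.R + n * C.span) (T₀ + C.R + n * C.span + C.R)) := by
  induction n with
  | zero => exact ⟨lam₀, le_rfl, hlam₀.2, by simpa using hlam₀.1.le, by simpa using habove⟩
  | succ n ih =>
    obtain ⟨lam, hle, hlt, hpow, habove⟩ := ih
    have hlam : 0 < lam := hlam₀.1.trans_le hle
    have hθlam : θ * lam < 1 := mul_lt_one_of_nonneg_of_lt_one_left hθ.pos.le hθ.lt_one hlt.le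
    have hθlam₀ : θ * lam₀ ≤ θ * lam := mul_le_mul_of_nonneg_left hle hθ.pos.le
    have hfactor : 1 - (lam + θ * (lam * (1 - lam))) = (1 - lam) * (1 - θ * lam) := by ring
    refine ⟨lam + θ * (lam * (1 - lam)), ?_, ?_, ?_, ?_⟩
    · linarith [mul_pos hθ.pos (mul_pos hlam (sub_pos.2 hlt))]
    · linarith [mul_pos (sub_pos.2 hlt) (sub_pos.2 hθlam)]
    · rw [hfactor, pow_succ]
      exact mul_le_mul hpow (by linarith) (by linarith) (pow_nonneg (by linarith) n)
    · have hstart : T₀ + C.R ≤ T₀ + C.R + n * C.span :=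
        le_add_of_nonneg_right (mul_nonneg n.cast_nonneg C.span_pos.le)
      convert habove.raise C hN hM hx hy ⟨hlam, hlt⟩ hstart hθ using 2 <;> push_cast <;> ring

lemma Admissible.exists_forall_sub_lt (hN : Admissible r N) (hM : 0 < M) (hMK : M ≤ K) {ε : ℝ}
    (hε : 0 < ε) :
    ∃ τ, ∀ x y T₀, IsSolutionIn N r (Ici T₀) M K x → IsSolutionIn N r (Ici T₀) M K y →
      ∀ t, T₀ + τ ≤ t → ∀ i, x t i - y t i < ε := by
  obtain ⟨C⟩ := hN.nonempty_bounds
  obtain ⟨θ, hθ⟩ := C.exists_isStep hM (K := K)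
  obtain ⟨lam₀, hlam₀, hinit⟩ := exists_isAboveOn C hM K hN
  have hK : 0 < K := hM.trans_le hMK
  obtain ⟨n, hn⟩ := exists_pow_lt_of_lt_one (div_pos hε hK)
    (sub_lt_self 1 (mul_pos hθ.pos hlam₀.1))
  refine ⟨C.R + n * C.span + C.R, fun x y T₀ hx hy t ht i ↦ ?_⟩
  obtain ⟨lam, hle, hlt, hpow, habove⟩ :=
    exists_isAboveOn_one_sub_le_pow C hN hM hx hy hlam₀ hθ (hinit x y T₀ hx hy) n
  have hspan : 0 ≤ n * C.span := mul_nonneg n.cast_nonneg C.span_pos.le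
  have hgap := (habove.gap_pos_and_le_driveGap C hN hM hx hy ⟨(hlam₀.1.trans_le hle).le, hlt.le⟩
    (by linarith) (by linarith : _ ≤ t) i).1
  have hxK : x t i ≤ K := (hx.mem_Icc t (by rw [mem_Ici]; linarith [C.R_pos]) i).2
  rw [gap] at hgap
  calc x t i - y t i ≤ (1 - lam) * x t i := by linarith
    _ ≤ (1 - lam) * K := mul_le_mul_of_nonneg_left hxK (sub_nonneg.2 hlt.le)
    _ < ε := (lt_div_iff₀ hK).1 (hpow.trans_lt hn)

theorem Admissible.exists_forall_abs_sub_lt (hN : Admissible r N) (hM : 0 < M) (hMK : M ≤ K)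
    {ε : ℝ} (hε : 0 < ε) :
    ∃ τ, ∀ x y T₀, IsSolutionIn N r (Ici T₀) M K x → IsSolutionIn N r (Ici T₀) M K y →
      ∀ t, T₀ + τ ≤ t → ∀ i, |x t i - y t i| < ε := by
  obtain ⟨τ, hτ⟩ := hN.exists_forall_sub_lt hM hMK hε
  refine ⟨τ, fun x y T₀ hx hy t ht i ↦ abs_sub_lt_iff.2 ⟨hτ x y T₀ hx hy t ht i, ?_⟩⟩
  exact hτ y x T₀ hy hx t ht i

theorem Admissible.eq_of_isSolutionIn_univ (hN : Admissible r N) (hM : 0 < M)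
    (hx : IsSolutionIn N r univ M K x) (hy : IsSolutionIn N r univ M K y) : x = y := by
  funext t i
  have hMK : M ≤ K := (hx.mem_Icc t trivial i).1.trans (hx.mem_Icc t trivial i).2
  by_contra hne
  obtain ⟨τ, hτ⟩ := hN.exists_forall_abs_sub_lt hM hMK (abs_pos.2 (sub_ne_zero.2 hne))
  exact lt_irrefl _ (hτ x y (t - τ) (hx.mono (subset_univ _) le_rfl le_rfl)
    (hy.mono (subset_univ _) le_rfl le_rfl) t (by linarith) i)

end Contraction

section Hull

lemma tendsto_intervalIntegral_of_tendstoUniformly {α : Type*} {l : Filter α} {f : α → ℝ → ℝ}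
    {F : ℝ → ℝ} (hf : ∀ n, Continuous (f n)) (hF : Continuous F) (hlim : TendstoUniformly f F l)
    (p q : ℝ) : Tendsto (fun n ↦ ∫ s in p..q, f n s) l (𝓝 (∫ s in p..q, F s)) := by
  refine Metric.tendsto_nhds.2 fun ε hε ↦ ?_
  have hε' : 0 < ε / (|q - p| + 1) := by positivity
  filter_upwards [Metric.tendstoUniformly_iff.1 hlim _ hε'] with n hn
  rw [Real.dist_eq, ← intervalIntegral.integral_sub ((hf n).intervalIntegrable _ _)
    (hF.intervalIntegrable _ _), ← Real.norm_eq_abs]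
  calc ‖∫ s in p..q, f n s - F s‖
      ≤ ε / (|q - p| + 1) * |q - p| :=
        intervalIntegral.norm_integral_le_of_norm_le_const fun s _ ↦ by
          rw [← dist_eq_norm, dist_comm]; exact (hn s).le
    _ < ε / (|q - p| + 1) * (|q - p| + 1) := by gcongr; linarith
    _ = ε := div_mul_cancel₀ _ (by positivity)

lemma tendsto_prod_nhds_of_eventually_lipschitz {α : Type*} {l : Filter α} {f : α → ℝ → ℝ}
    {t w B : ℝ} (hlim : Tendsto (fun n ↦ f n t) l (𝓝 w))
    (hlip : ∀ᶠ p in l ×ˢ 𝓝 t, |f p.1 p.2 - f p.1 t| ≤ B * |p.2 - t|) :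
    Tendsto (fun p ↦ f p.1 p.2) (l ×ˢ 𝓝 t) (𝓝 w) := by
  have hdist : Tendsto (fun p : α × ℝ ↦ B * |p.2 - t|) (l ×ˢ 𝓝 t) (𝓝 0) := by
    have h := ((tendsto_snd (f := l) (g := 𝓝 t)).sub_const t).abs.const_mul B
    rwa [sub_self, abs_zero, mul_zero] at h
  have hdiff : Tendsto (fun p ↦ f p.1 p.2 - f p.1 t) (l ×ˢ 𝓝 t) (𝓝 0) :=
    squeeze_zero_norm' hlip hdist
  simpa using hdiff.add (hlim.comp tendsto_fst)

lemma hasDerivAt_of_tendsto_prod_nhds {α : Type*} {l : Filter α} [l.NeBot] {f f' : α → ℝ → ℝ}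
    {F : ℝ → ℝ} {w t : ℝ} (hlim : ∀ s, Tendsto (fun n ↦ f n s) l (𝓝 (F s)))
    (hderiv : ∀ᶠ p in l ×ˢ 𝓝 t, HasDerivAt (f p.1) (f' p.1 p.2) p.2)
    (hlim' : Tendsto (fun p ↦ f' p.1 p.2) (l ×ˢ 𝓝 t) (𝓝 w)) : HasDerivAt F w t := by
  refine hasDerivAt_of_tendstoUniformlyOnFilter (g' := fun _ ↦ w) ?_ hderiv (.of_forall hlim)
  rw [tendstoUniformlyOnFilter_iff_tendsto]
  exact (tendsto_const_nhds.prodMk_nhds hlim').mono_right (nhds_le_uniformity w)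

variable {m : ℕ} {r : Fin m → ℝ} {N N' : CoeffIndex m → ℝ → ℝ} {y y' : ℝ → Fin m → ℝ}
  {S : Set ℝ} {M K : ℝ} {α : Type*} {u : α → ℝ}

lemma Admissible.of_tendstoUniformly_translate (hN : Admissible r N) {U : Ultrafilter α}
    (hlim : ∀ k, TendstoUniformly (fun n t ↦ N k (t + u n)) (N' k) U) : Admissible r N' := by
  have hAP : ∀ k, AlmostPeriodic (N' k) := fun k ↦
    (hN.almostPeriodic k).of_tendstoUniformly_translate (hlim k)
  obtain ⟨c₀, hc₀, hc⟩ := hN.c_ge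
  obtain ⟨η, hη, hbirth⟩ := hN.birth_le
  refine ⟨hN.delay_pos, hAP, fun i j t ↦ ?_, ?_, ⟨c₀, hc₀, fun i t ↦ ?_⟩, ⟨η, hη, fun i t ↦ ?_⟩⟩
  · exact ge_of_tendsto' ((hlim _).tendsto_at t) fun n ↦ hN.a_nonneg i j _
  · exact hN.jointlyPositive_β.of_tendstoUniformly_translate (fun i ↦ hN.almostPeriodic _)
      fun i ↦ hlim _
  · exact ge_of_tendsto' ((hlim _).tendsto_at t) fun n ↦ hc i _
  · have hint := tendsto_intervalIntegral_of_tendstoUniformly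
      (f := fun n s ↦ N (.d i) (s + u n))
      (fun n ↦ (hN.continuous (.d i)).comp (continuous_add_const (u n))) (hAP (.d i)).1
      (hlim (.d i)) (t - r i) t
    refine le_of_tendsto' ((((hlim (.β i)).tendsto_at t).mul hint.rexp).mul_const _) fun n ↦ ?_
    rw [intervalIntegral.integral_comp_add_right (N (.d i)), sub_add_eq_add_sub]
    exact hbirth i (t + u n)

lemma IsSolutionIn.hasDerivAt_translate (hy : IsSolutionIn N r S M K y) {s v : ℝ}
    (hs : s + v ∈ S) (i : Fin m) :
    HasDerivAt (fun t ↦ y (t + v) i) (field N r y (s + v) i) s :=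
  (hy.hasDerivAt _ hs i).comp_add_const s v

lemma IsSolutionIn.eventually_lipschitz (C : Bounds r N) (hM : 0 ≤ M)
    (hy : IsSolutionIn N r S M K y) {l : Filter α} (hS : ∀ A, ∀ᶠ n in l, ∀ t, A ≤ t → t + u n ∈ S)
    (t : ℝ) (i : Fin m) :
    ∀ᶠ p in l ×ˢ 𝓝 t,
      |y (p.2 + u p.1) i - y (t + u p.1) i| ≤ (m + 2) * (C.D * K) * |p.2 - t| := by
  filter_upwards [(hS (t - 1 - C.R)).prod_mk (Ioi_mem_nhds (sub_one_lt t))] with p ⟨hp, hs⟩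
  have hS' : ∀ s, t - 1 ≤ s → s + u p.1 ∈ S := fun s hs ↦ hp s (by linarith [C.R_pos])
  refine (convex_Ici (t - 1)).norm_image_sub_le_of_norm_hasDerivWithin_le
    (fun s hs ↦ (hy.hasDerivAt_translate (hS' s hs) i).hasDerivWithinAt)
    (fun s hs ↦ ?_) (sub_one_lt t).le (le_of_lt hs)
  have hmem : ∀ s, s ∈ S → ∀ j, y s j ∈ Icc 0 K := fun s hs j ↦
    Icc_subset_Icc hM le_rfl (hy.mem_Icc s hs j)
  refine C.abs_field_le (hmem _ (hS' s hs)) ?_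
  rw [add_sub_right_comm]
  exact hmem _ (hp _ (by linarith [C.delay_le i, mem_Ici.1 hs])) i

lemma tendsto_field_translate {l : Filter α} {t : ℝ}
    (hN' : ∀ k, Tendsto (fun p : α × ℝ ↦ N k (p.2 + u p.1)) (l ×ˢ 𝓝 t) (𝓝 (N' k t)))
    (hy' : ∀ s i, Tendsto (fun p : α × ℝ ↦ y (p.2 + u p.1) i) (l ×ˢ 𝓝 s) (𝓝 (y' s i)))
    (i : Fin m) :
    Tendsto (fun p : α × ℝ ↦ field N r y (p.2 + u p.1) i) (l ×ˢ 𝓝 t) (𝓝 (field N' r y' t i)) := by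
  have hdelay : Tendsto (fun p : α × ℝ ↦ y (p.2 + u p.1 - r i) i) (l ×ˢ 𝓝 t)
      (𝓝 (y' (t - r i) i)) := by
    have hshift : Tendsto (fun p : α × ℝ ↦ (p.1, p.2 - r i)) (l ×ˢ 𝓝 t) (l ×ˢ 𝓝 (t - r i)) :=
      tendsto_fst.prodMk (tendsto_snd.sub_const (r i))
    exact ((hy' (t - r i) i).comp hshift).congr fun p ↦ by
      simp only [Function.comp_apply, sub_add_eq_add_sub]
  exact (((hN' (.d i)).neg.mul (hy' t i)).add
    (tendsto_finsetSum _ fun j _ ↦ (hN' (.a i j)).mul (hy' t j))).add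
      ((hN' (.β i)).mul (hdelay.mul ((hN' (.c i)).mul hdelay).neg.rexp))

lemma isSolutionIn_univ_of_tendsto_translate (C : Bounds r N) (hM : 0 ≤ M)
    (hy : IsSolutionIn N r S M K y) {l : Filter α} [l.NeBot]
    (hS : ∀ A, ∀ᶠ n in l, ∀ t, A ≤ t → t + u n ∈ S) (hcont : ∀ k, Continuous (N' k))
    (hlim : ∀ k, TendstoUniformly (fun n t ↦ N k (t + u n)) (N' k) l)
    (hy' : ∀ t i, Tendsto (fun n ↦ y (t + u n) i) l (𝓝 (y' t i))) :
    IsSolutionIn N' r univ M K y' := by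
  have hy'_prod : ∀ t i, Tendsto (fun p : α × ℝ ↦ y (p.2 + u p.1) i) (l ×ˢ 𝓝 t) (𝓝 (y' t i)) :=
    fun t i ↦ tendsto_prod_nhds_of_eventually_lipschitz (f := fun n s ↦ y (s + u n) i)
      (hy' t i) (hy.eventually_lipschitz C hM hS t i)
  have hN'_prod : ∀ t k, Tendsto (fun p : α × ℝ ↦ N k (p.2 + u p.1)) (l ×ˢ 𝓝 t) (𝓝 (N' k t)) :=
    fun t k ↦ TendstoUniformly.tendsto_comp (F := fun (p : α × ℝ) s ↦ N k (s + u p.1))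
      (fun V hV ↦ tendsto_fst.eventually (hlim k V hV)) (hcont k).continuousAt tendsto_snd
  refine ⟨fun t _ i ↦ ?_, fun t _ i ↦ ?_⟩
  · refine hasDerivAt_of_tendsto_prod_nhds (f' := fun n s ↦ field N r y (s + u n) i)
      (fun s ↦ hy' s i) ?_ (tendsto_field_translate (hN'_prod t) hy'_prod i)
    filter_upwards [(hS (t - 1)).prod_mk (Ioi_mem_nhds (sub_one_lt t))] with p ⟨hp, hs⟩
    exact hy.hasDerivAt_translate (hp p.2 (le_of_lt hs)) i
  · refine isClosed_Icc.mem_of_tendsto (hy' t i) ?_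
    filter_upwards [hS t] with n hn using hy.mem_Icc _ (hn t le_rfl) i

theorem Admissible.exists_isSolutionIn_univ (hN : Admissible r N) (hM : 0 ≤ M)
    (hy : IsSolutionIn N r S M K y) {U : Ultrafilter α}
    (hS : ∀ A, ∀ᶠ n in U, ∀ t, A ≤ t → t + u n ∈ S)
    (hlim : ∀ k, TendstoUniformly (fun n t ↦ N k (t + u n)) (N' k) U) :
    ∃ y', IsSolutionIn N' r univ M K y' ∧
      ∀ t i, Tendsto (fun n ↦ y (t + u n) i) U (𝓝 (y' t i)) := by
  obtain ⟨C⟩ := hN.nonempty_bounds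
  have hexists : ∀ t i, ∃ w ∈ Icc M K, Tendsto (fun n ↦ y (t + u n) i) U (𝓝 w) := fun t i ↦
    exists_tendsto_of_eventually_mem_Icc ((hS t).mono fun n hn ↦ hy.mem_Icc _ (hn t le_rfl) i)
  choose y' _ hy' using hexists
  exact ⟨y', isSolutionIn_univ_of_tendsto_translate C hM hy hS
    (hN.of_tendstoUniformly_translate hlim).continuous hlim hy', hy'⟩

end Hull

section Picard

open scoped BoundedContinuousFunction

variable {E : Type*} [NormedAddCommGroup E] [NormedSpace ℝ E] {G : (ℝ → E) → ℝ → E}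
  {A B C γ T t : ℝ} {v₀ : E} {u v : ℝ → E}

/-- A functional `G` on functions of time, preserving continuity, whose value at time `t` is a
`C`-Lipschitz function of the restriction to `(-∞, t]`: the right-hand side of a functional
differential equation `u' = G u`. -/
structure IsCausalLipschitz (G : (ℝ → E) → ℝ → E) (C : ℝ) : Prop where
  continuous : ∀ u, Continuous u → Continuous (G u)
  norm_sub_le : ∀ u v t B, (∀ s ≤ t, ‖u s - v s‖ ≤ B) → ‖G u t - G v t‖ ≤ C * B

/-- The function `u` multiplied by `e^{γt}` on `[0, ∞)`. -/
def expWeight (γ : ℝ) (u : ℝ → E) (t : ℝ) : E := Real.exp (γ * max t 0) • u t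

/-- The Picard operator for `u' = G u`, `u = v₀` on `(-∞, 0]`, conjugated by `expWeight γ`, which
makes it a contraction for the supremum norm on all of `ℝ`. -/
def picardMap (G : (ℝ → E) → ℝ → E) (γ : ℝ) (v₀ : E) (u : ℝ → E) (t : ℝ) : E :=
  Real.exp (-(γ * max t 0)) • (v₀ + ∫ s in (0 : ℝ)..max t 0, G (expWeight γ u) s)

lemma continuous_expWeight (γ : ℝ) (hu : Continuous u) : Continuous (expWeight γ u) :=
  Continuous.smul (by fun_prop) hu

lemma expWeight_picardMap :
    expWeight γ (picardMap G γ v₀ u) t =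
      v₀ + ∫ s in (0 : ℝ)..max t 0, G (expWeight γ u) s := by
  rw [expWeight, picardMap, smul_smul, ← Real.exp_add, add_neg_cancel, Real.exp_zero, one_smul]

lemma norm_expWeight_sub_le (hγ : 0 ≤ γ) (huv : ∀ s, ‖u s - v s‖ ≤ B) {s : ℝ} (hs : s ≤ t)
    (ht : 0 ≤ t) : ‖expWeight γ u s - expWeight γ v s‖ ≤ Real.exp (γ * t) * B := by
  rw [expWeight, expWeight, ← smul_sub, norm_smul, Real.norm_of_nonneg (Real.exp_pos _).le]
  have hmax : max s 0 ≤ t := max_le hs ht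
  gcongr
  exact huv s

lemma exp_neg_mul_norm_integral_le (hγ : 0 < γ) (hA : 0 ≤ A) (hT : 0 ≤ T) {f : ℝ → E}
    (hf : ∀ s, 0 ≤ s → ‖f s‖ ≤ A * Real.exp (γ * s)) :
    Real.exp (-(γ * T)) * ‖∫ s in (0 : ℝ)..T, f s‖ ≤ A / γ := by
  have hprimitive : ∀ s, HasDerivAt (fun s ↦ A / γ * Real.exp (γ * s)) (A * Real.exp (γ * s)) s :=
    fun s ↦ ((((hasDerivAt_id s).const_mul γ).exp).const_mul (A / γ)).congr_deriv
      (by simp only [id]; field_simp)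
  have hint : IntervalIntegrable (fun s ↦ A * Real.exp (γ * s)) volume 0 T :=
    Continuous.intervalIntegrable (by fun_prop) 0 T
  have hnorm : ‖∫ s in (0 : ℝ)..T, f s‖ ≤ A / γ * Real.exp (γ * T) := by
    calc ‖∫ s in (0 : ℝ)..T, f s‖ ≤ ∫ s in (0 : ℝ)..T, A * Real.exp (γ * s) :=
          intervalIntegral.norm_integral_le_of_norm_le hT (.of_forall fun s hs ↦ hf s hs.1.le) hint
      _ = A / γ * Real.exp (γ * T) - A / γ * Real.exp (γ * 0) :=
          intervalIntegral.integral_eq_sub_of_hasDerivAt (fun s _ ↦ hprimitive s) hint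
      _ ≤ A / γ * Real.exp (γ * T) := sub_le_self _ (by positivity)
  calc Real.exp (-(γ * T)) * ‖∫ s in (0 : ℝ)..T, f s‖
      ≤ Real.exp (-(γ * T)) * (A / γ * Real.exp (γ * T)) := by gcongr
    _ = A / γ := by rw [mul_left_comm, ← Real.exp_add, neg_add_cancel, Real.exp_zero, mul_one]

lemma norm_picardMap_zero_le (hγ : 0 < γ) (hG₀ : ∀ s, ‖G 0 s‖ ≤ A) (v₀ : E) (t : ℝ) :
    ‖picardMap G γ v₀ 0 t‖ ≤ ‖v₀‖ + A / γ := by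
  have hA : 0 ≤ A := (norm_nonneg _).trans (hG₀ 0)
  have hT : 0 ≤ γ * max t 0 := mul_nonneg hγ.le (le_max_right t 0)
  have hzero : expWeight γ (0 : ℝ → E) = 0 := funext fun s ↦ smul_zero _
  rw [picardMap, hzero, smul_add]
  refine norm_add_le_of_le ?_ ?_
  · rw [norm_smul, Real.norm_of_nonneg (Real.exp_pos _).le]
    exact mul_le_of_le_one_left (norm_nonneg _) (Real.exp_le_one_iff.2 (neg_nonpos.2 hT))
  · rw [norm_smul, Real.norm_of_nonneg (Real.exp_pos _).le]
    exact exp_neg_mul_norm_integral_le hγ hA (le_max_right t 0) fun s hs ↦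
      (hG₀ s).trans (le_mul_of_one_le_right hA (Real.one_le_exp (by positivity)))

namespace IsCausalLipschitz

lemma continuous_picardMap (hG : IsCausalLipschitz G C) (γ : ℝ) (v₀ : E) (hu : Continuous u) :
    Continuous (picardMap G γ v₀ u) := by
  have hint : Continuous fun x ↦ ∫ s in (0 : ℝ)..x, G (expWeight γ u) s :=
    intervalIntegral.continuous_primitive
      (fun p q ↦ (hG.continuous _ (continuous_expWeight γ hu)).intervalIntegrable p q) 0
  exact Continuous.smul (by fun_prop)
    (continuous_const.add (hint.comp (continuous_id.max continuous_const)))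

lemma norm_picardMap_sub_le (hG : IsCausalLipschitz G C) (hC : 0 ≤ C) (hγ : 0 < γ)
    (hu : Continuous u) (hv : Continuous v) (huv : ∀ s, ‖u s - v s‖ ≤ B) :
    ‖picardMap G γ v₀ u t - picardMap G γ v₀ v t‖ ≤ C * B / γ := by
  have hB : 0 ≤ B := (norm_nonneg _).trans (huv 0)
  have hint : ∀ w, Continuous w →
      IntervalIntegrable (G (expWeight γ w)) volume 0 (max t 0) := fun w hw ↦
    (hG.continuous _ (continuous_expWeight γ hw)).intervalIntegrable _ _
  rw [picardMap, picardMap, ← smul_sub, add_sub_add_left_eq_sub,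
    ← intervalIntegral.integral_sub (hint u hu) (hint v hv), norm_smul,
    Real.norm_of_nonneg (Real.exp_pos _).le]
  refine exp_neg_mul_norm_integral_le hγ (by positivity) (le_max_right t 0) fun s hs ↦ ?_
  calc ‖G (expWeight γ u) s - G (expWeight γ v) s‖ ≤ C * (Real.exp (γ * s) * B) :=
        hG.norm_sub_le _ _ s _ fun w hw ↦ norm_expWeight_sub_le hγ.le huv hw hs
    _ = C * B * Real.exp (γ * s) := by ring

lemma exists_picardMap_eq_self [CompleteSpace E] (hG : IsCausalLipschitz G C) (hC : 0 < C)
    (hG₀ : ∀ s, ‖G 0 s‖ ≤ A) (v₀ : E) :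
    ∃ u, Continuous u ∧ picardMap G (2 * C) v₀ u = u := by
  have hγ : 0 < 2 * C := by positivity
  have hcontract : ∀ (u v : ℝ → E) (B t : ℝ), Continuous u → Continuous v →
      (∀ s, ‖u s - v s‖ ≤ B) →
      ‖picardMap G (2 * C) v₀ u t - picardMap G (2 * C) v₀ v t‖ ≤ 1 / 2 * B :=
    fun u v B t hu hv huv ↦ (hG.norm_picardMap_sub_le hC.le hγ hu hv huv).trans_eq (by field_simp)
  have hbound : ∀ (u : ℝ →ᵇ E) t,
      ‖picardMap G (2 * C) v₀ u t‖ ≤ 1 / 2 * ‖u‖ + (‖v₀‖ + A / (2 * C)) := fun u t ↦ by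
    have hdiff := hcontract u 0 ‖u‖ t u.continuous continuous_zero fun s ↦ by
      simpa using u.norm_coe_le_norm s
    simpa using norm_add_le_of_le hdiff (norm_picardMap_zero_le hγ hG₀ v₀ t)
  let Φ (u : ℝ →ᵇ E) : ℝ →ᵇ E := .ofNormedAddCommGroup (picardMap G (2 * C) v₀ u)
    (hG.continuous_picardMap _ v₀ u.continuous) _ (hbound u)
  have hΦ : ContractingWith (1 / 2) Φ := by
    refine ⟨by norm_num, LipschitzWith.of_dist_le_mul fun u v ↦ ?_⟩
    refine (BoundedContinuousFunction.dist_le (by positivity)).2 fun t ↦ ?_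
    have huv := hcontract u v (dist u v) t u.continuous v.continuous fun s ↦ by
      rw [← dist_eq_norm]; exact BoundedContinuousFunction.dist_coe_le_dist s
    rw [dist_eq_norm]
    exact huv.trans_eq (by norm_num)
  obtain ⟨u, hu⟩ : ∃ u, Φ u = u := ⟨_, hΦ.fixedPoint_isFixedPt⟩
  exact ⟨u, u.continuous, congrArg DFunLike.coe hu⟩

theorem exists_hasDerivWithinAt [CompleteSpace E] (hG : IsCausalLipschitz G C) (hC : 0 < C)
    (hG₀ : ∀ s, ‖G 0 s‖ ≤ A) (v₀ : E) :
    ∃ u, Continuous u ∧ (∀ t ≤ 0, u t = v₀) ∧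
      ∀ t, 0 ≤ t → HasDerivWithinAt u (G u t) (Ici t) t := by
  obtain ⟨u, hu, hfix⟩ := hG.exists_picardMap_eq_self hC hG₀ v₀
  set w := expWeight (2 * C) u with hw
  have hwcont : Continuous w := continuous_expWeight _ hu
  have hw_eq : ∀ t, w t = v₀ + ∫ s in (0 : ℝ)..max t 0, G w s := fun t ↦ by
    conv_lhs => rw [hw, ← hfix, expWeight_picardMap]
  refine ⟨w, hwcont, fun t ht ↦ ?_, fun t ht ↦ ?_⟩
  · rw [hw_eq, max_eq_right ht, intervalIntegral.integral_same, add_zero]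
  · have hFTC : HasDerivAt (fun x ↦ v₀ + ∫ s in (0 : ℝ)..x, G w s) (G w t) t :=
      ((hG.continuous w hwcont).integral_hasStrictDerivAt 0 t).hasDerivAt.const_add v₀
    refine hFTC.hasDerivWithinAt.congr (fun x hx ↦ ?_) ?_
    · rw [hw_eq, max_eq_left (ht.trans hx)]
    · rw [hw_eq, max_eq_left ht]

end IsCausalLipschitz

end Picard

section ForwardSolutions

variable {m : ℕ} {r : Fin m → ℝ} {N : CoeffIndex m → ℝ → ℝ} {y : ℝ → Fin m → ℝ}

lemma hasDerivAt_of_hasDerivWithinAt_field (hr : ∀ i, 0 < r i) (hN : ∀ k, Continuous (N k))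
    {x y : ℝ → Fin m → ℝ} (hx : ∀ i, ContinuousOn (fun t ↦ x t i) (Ici (-r i)))
    (hy : ∀ i, ContinuousOn (fun t ↦ y t i) (Ici (-r i)))
    (hderiv : ∀ i t, 0 ≤ t → HasDerivWithinAt (fun s ↦ y s i) (field N r x t i) (Ici t) t)
    {t : ℝ} (ht : 0 < t) (i : Fin m) : HasDerivAt (fun s ↦ y s i) (field N r x t i) t := by
  have hsub : ∀ j, Ici (0 : ℝ) ⊆ Ici (-r j) := fun j ↦ Ici_subset_Ici.2 (by linarith [hr j])
  have hdelay : ContinuousOn (fun t ↦ x (t - r i) i) (Ici 0) :=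
    (hx i).comp (by fun_prop) fun s hs ↦ by
      rw [mem_Ici] at *
      linarith
  exact hasDerivAt_of_hasDerivWithinAt_Ici ((hy i).mono (hsub i))
    (continuousOn_field hN (fun j ↦ (hx j).mono (hsub j)) hdelay) (hderiv i) ht

/-- The right-hand side evaluated along the absolute values of `u`. It is globally Lipschitz in
`u`, unlike `field`, and agrees with `field` along nonnegative functions. -/
def absField (N : CoeffIndex m → ℝ → ℝ) (r : Fin m → ℝ) (u : ℝ → Fin m → ℝ) (t : ℝ) : Fin m → ℝ :=
  fun i ↦ field N r (fun s j ↦ |u s j|) t i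

lemma Bounds.isCausalLipschitz_absField (C : Bounds r N) (hN : Admissible r N) :
    IsCausalLipschitz (absField N r) ((m + 2) * C.D) := by
  refine ⟨fun u hu ↦ continuous_pi fun i ↦ ?_, fun u v t B huv ↦ ?_⟩
  · rw [← continuousOn_univ]
    exact continuousOn_field hN.continuous (fun j ↦ by fun_prop) (by fun_prop)
  · have hB : 0 ≤ B := (norm_nonneg _).trans (huv t le_rfl)
    have hcoord : ∀ s ≤ t, ∀ j, |(|u s j| - |v s j|)| ≤ B := fun s hs j ↦
      (abs_abs_sub_abs_le _ _).trans ((norm_le_pi_norm (u s - v s) j).trans (huv s hs))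
    refine (pi_norm_le_iff_of_nonneg (by have := C.D_pos; positivity)).2 fun i ↦ ?_
    rw [mul_assoc]
    exact C.abs_field_sub_le (abs_nonneg _) (abs_nonneg _) (hcoord t le_rfl)
      (hcoord _ (by linarith [hN.delay_pos i]) i)

lemma Admissible.neg_mul_le_absField (hN : Admissible r N) (u : ℝ → Fin m → ℝ) (t : ℝ)
    (i : Fin m) : -N (.d i) t * |u t i| ≤ absField N r u t i := by
  have hsum : 0 ≤ ∑ j, N (.a i j) t * |u t j| :=
    Finset.sum_nonneg fun j _ ↦ mul_nonneg (hN.a_nonneg i j t) (abs_nonneg _)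
  have hbirth : 0 ≤ N (.β i) t * ricker (N (.c i) t) |u (t - r i) i| :=
    mul_nonneg (hN.jointlyPositive_β.1 i t) (ricker_nonneg (abs_nonneg _))
  rw [absField, field]
  linarith

lemma Admissible.pos_of_hasDerivAt_absField (hN : Admissible r N) (hy : Continuous y)
    (hy₀ : ∀ i, 0 < y 0 i)
    (hderiv : ∀ t, 0 < t → ∀ i, HasDerivAt (fun s ↦ y s i) (absField N r y t i) t) :
    ∀ t, 0 ≤ t → ∀ i, 0 < y t i := by
  have hycont : ∀ i, Continuous fun t ↦ y t i := fun i ↦ by fun_prop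
  refine forall_pos_of_forall_Ico_pos (F := fun i t ↦ y t i) (fun i ↦ (hycont i).continuousOn)
    fun t ht hpos i ↦ ?_
  have hgrowth : y 0 i * Real.exp (∫ s in (0 : ℝ)..0, N (.d i) s) ≤
      y t i * Real.exp (∫ s in (0 : ℝ)..t, N (.d i) s) :=
    mul_exp_le_mul_exp ht (hycont i).continuousOn (fun s hs ↦ hderiv s hs.1 i)
      (fun s ↦ ((hN.continuous (.d i)).integral_hasStrictDerivAt 0 s).hasDerivAt) fun s hs ↦ by
        have hlower := hN.neg_mul_le_absField y s i
        rw [abs_of_pos (hpos s ⟨hs.1.le, hs.2⟩ i)] at hlower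
        linarith
  exact pos_of_mul_pos_left ((mul_pos (hy₀ i) (Real.exp_pos _)).trans_le hgrowth)
    (Real.exp_pos _).le

theorem Admissible.exists_forward_solution (hN : Admissible r N) :
    ∃ y : ℝ → Fin m → ℝ, Continuous y ∧ (∀ t ≤ 0, y t = 1) ∧
      ∀ i t, 0 ≤ t → HasDerivWithinAt (fun s ↦ y s i) (field N r y t i) (Ici t) t := by
  obtain ⟨C⟩ := hN.nonempty_bounds
  have hzero : ∀ s, ‖absField N r 0 s‖ ≤ 0 := fun s ↦ by
    have hfield : absField N r 0 s = 0 := funext fun i ↦ by simp [absField, field, ricker]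
    rw [hfield, norm_zero]
  obtain ⟨y, hycont, hy_one, hy⟩ := (C.isCausalLipschitz_absField hN).exists_hasDerivWithinAt
    (by have := C.D_pos; positivity) hzero 1
  have hycoord : ∀ i, Continuous fun t ↦ y t i := fun i ↦ by fun_prop
  have hpos : ∀ t, 0 ≤ t → ∀ i, 0 < y t i :=
    hN.pos_of_hasDerivAt_absField hycont (fun i ↦ by simp [hy_one 0 le_rfl]) fun t ht i ↦
      hasDerivAt_of_hasDerivWithinAt_field hN.delay_pos hN.continuous
        (fun j ↦ (hycoord j).abs.continuousOn) (fun j ↦ (hycoord j).continuousOn)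
        (fun j s hs ↦ hasDerivWithinAt_pi.1 (hy s hs) j) ht i
  have habs : (fun s j ↦ |y s j|) = y := by
    ext s j
    refine abs_of_pos ?_
    rcases le_total s 0 with hs | hs
    · simp [hy_one s hs]
    · exact hpos s hs j
  refine ⟨y, hycont, hy_one, fun i t ht ↦ ?_⟩
  have hderiv := hasDerivWithinAt_pi.1 (hy t ht) i
  rwa [absField, habs] at hderiv

end ForwardSolutions

section Dissipation

variable {V V' : ℝ → ℝ} {S : Set ℝ} {T A p q δ κ L ρ τ θ B K : ℝ}

lemma le_add_mul_sub_of_deriv_le (hpq : p ≤ q) (hV : ∀ t ∈ Icc p q, HasDerivAt V (V' t) t)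
    (hV' : ∀ t ∈ Ioo p q, V' t ≤ κ) : V q ≤ V p + κ * (q - p) := by
  have := mul_sub_le_sub_of_le_deriv (f := fun t ↦ -V t) (f' := fun t ↦ -V' t) (C := -κ) hpq
    (fun t ht ↦ (hV t ht).neg.continuousAt.continuousWithinAt)
    (fun t ht ↦ (hV t (Ioo_subset_Icc_self ht)).neg) (fun t ht ↦ neg_le_neg (hV' t ht))
  linarith

lemma le_mul_exp_neg_add_div (hδ : 0 < δ) (hκ : 0 ≤ κ) (hpq : p ≤ q)
    (hV : ∀ t ∈ Icc p q, HasDerivAt V (V' t) t) (hV' : ∀ t ∈ Ioo p q, V' t ≤ -δ * V t + κ) :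
    V q ≤ V p * Real.exp (-(δ * (q - p))) + κ / δ := by
  have hw (t : ℝ) : HasDerivAt (fun t ↦ δ * t) δ t := by simpa using (hasDerivAt_id t).const_mul δ
  have hgrowth := mul_exp_le_mul_exp (z := fun t ↦ κ / δ - V t) (z' := fun t ↦ -V' t) hpq
    (fun t ht ↦ ((hV t ht).const_sub _).continuousAt.continuousWithinAt)
    (fun t ht ↦ (hV t (Ioo_subset_Icc_self ht)).const_sub _) hw fun t ht ↦ by
      have := hV' t ht
      rw [mul_sub, mul_div_cancel₀ κ hδ.ne']
      linarith
  refine le_of_mul_le_mul_right ?_ (Real.exp_pos (δ * q))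
  have hexp : Real.exp (-(δ * (q - p))) * Real.exp (δ * q) = Real.exp (δ * p) := by
    rw [← Real.exp_add]; ring_nf
  have hdiv : 0 ≤ κ / δ * Real.exp (δ * p) := by positivity
  calc V q * Real.exp (δ * q)
      ≤ V p * Real.exp (δ * p) + κ / δ * Real.exp (δ * q) := by linarith
    _ = (V p * Real.exp (-(δ * (q - p))) + κ / δ) * Real.exp (δ * q) := by rw [← hexp]; ring

lemma HasRecurrentIntervals.le_mul_add (hrec : HasRecurrentIntervals S L ρ) (hδ : 0 < δ)
    (hκ : 0 ≤ κ) (hL : 0 ≤ L) (hρ : 0 ≤ ρ) (hV : ∀ t, A ≤ t → HasDerivAt V (V' t) t)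
    (hgrow : ∀ t, A ≤ t → V' t ≤ κ) (hdecay : ∀ t ∈ S, A ≤ t → V' t ≤ -δ * V t + κ) :
    V (A + (L + ρ)) ≤ Real.exp (-(δ * ρ)) * V A + (κ / δ + 2 * (κ * L)) := by
  obtain ⟨s, ⟨hAs, hsL⟩, hs⟩ := hrec A
  have hgrow_of_le : ∀ p q, A ≤ p → p ≤ q → q ≤ p + L → V q ≤ V p + κ * L :=
    fun p q hAp hpq hqL ↦ by
      have := le_add_mul_sub_of_deriv_le hpq (fun t ht ↦ hV t (hAp.trans ht.1))
        fun t ht ↦ hgrow t (hAp.trans ht.1.le)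
      have : κ * (q - p) ≤ κ * L := by gcongr; linarith
      linarith
  have hbefore : V s ≤ V A + κ * L := hgrow_of_le A s le_rfl hAs hsL
  have hduring : V (s + ρ) ≤ Real.exp (-(δ * ρ)) * V s + κ / δ := by
    have := le_mul_exp_neg_add_div hδ hκ (le_add_of_nonneg_right hρ)
      (fun t ht ↦ hV t (hAs.trans ht.1)) fun t ht ↦
        hdecay t (hs (Ioo_subset_Icc_self ht)) (hAs.trans ht.1.le)
    rwa [add_sub_cancel_left, mul_comm] at this
  have hafter : V (A + (L + ρ)) ≤ V (s + ρ) + κ * L :=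
    hgrow_of_le _ _ (by linarith) (by linarith) (by linarith)
  have hexp_le : Real.exp (-(δ * ρ)) * (κ * L) ≤ κ * L :=
    mul_le_of_le_one_left (by positivity)
      (Real.exp_le_one_iff.2 (neg_nonpos.2 (mul_nonneg hδ.le hρ)))
  have := mul_le_mul_of_nonneg_left hbefore (Real.exp_pos (-(δ * ρ))).le
  linarith

lemma le_max_of_forall_le_mul_add (hτ : 0 < τ) (hθ₀ : 0 ≤ θ) (hθ₁ : θ < 1)
    (hstart : ∀ t ∈ Icc T (T + τ), V t ≤ B) (hstep : ∀ t, T ≤ t → V (t + τ) ≤ θ * V t + K) :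
    ∀ t, T ≤ t → V t ≤ max B (K / (1 - θ)) := by
  have hfix : θ * max B (K / (1 - θ)) + K ≤ max B (K / (1 - θ)) := by
    have := (div_le_iff₀ (sub_pos.2 hθ₁)).1 (le_max_right B (K / (1 - θ)))
    linarith
  have hinduction : ∀ n : ℕ, ∀ t ∈ Icc T (T + (n + 1) * τ), V t ≤ max B (K / (1 - θ)) := by
    intro n
    induction n with
    | zero => exact fun t ht ↦ (hstart t (by simpa using ht)).trans (le_max_left _ _)
    | succ n ih =>
      intro t ht
      rcases le_total t (T + τ) with hle | hge
      · exact (hstart t ⟨ht.1, hle⟩).trans (le_max_left _ _)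
      · have hprev := ih (t - τ) ⟨by linarith, by have := ht.2; push_cast at this; linarith⟩
        have := hstep (t - τ) (by linarith)
        rw [sub_add_cancel] at this
        exact (this.trans (by gcongr)).trans hfix
  intro t ht
  obtain ⟨n, hn⟩ := exists_nat_ge ((t - T) / τ)
  refine hinduction n t ⟨ht, ?_⟩
  rw [div_le_iff₀ hτ] at hn
  linarith

lemma HasRecurrentIntervals.exists_forall_le (hrec : HasRecurrentIntervals S L ρ) (hδ : 0 < δ)
    (hκ : 0 ≤ κ) (hL : 0 ≤ L) (hρ : 0 < ρ) (hV : ∀ t, T ≤ t → HasDerivAt V (V' t) t)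
    (hgrow : ∀ t, T ≤ t → V' t ≤ κ) (hdecay : ∀ t ∈ S, T ≤ t → V' t ≤ -δ * V t + κ) :
    ∃ K, ∀ t, T ≤ t → V t ≤ K := by
  refine ⟨_, le_max_of_forall_le_mul_add (B := V T + κ * (L + ρ)) (by positivity)
    (Real.exp_pos _).le (Real.exp_lt_one_iff.2 (neg_lt_zero.2 (mul_pos hδ hρ))) (fun t ht ↦ ?_)
    fun A hA ↦ hrec.le_mul_add hδ hκ hL hρ.le (fun t ht ↦ hV t (hA.trans ht))
      (fun t ht ↦ hgrow t (hA.trans ht)) fun t htS ht ↦ hdecay t htS (hA.trans ht)⟩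
  have := le_add_mul_sub_of_deriv_le ht.1 (fun s hs ↦ hV s hs.1) fun s hs ↦ hgrow s hs.1.le
  have : κ * (t - T) ≤ κ * (L + ρ) := by gcongr; linarith [ht.2]
  linarith

variable {m : ℕ} {r : Fin m → ℝ} {N : CoeffIndex m → ℝ → ℝ} {y : ℝ → Fin m → ℝ} {M t : ℝ}

/-- The rate `dᵢ - ∑ⱼ aⱼᵢ` at which the `i`-th component leaves the total population. -/
def dissipation (N : CoeffIndex m → ℝ → ℝ) (i : Fin m) (t : ℝ) : ℝ :=
  N (.d i) t - ∑ j, N (.a j i) t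

lemma Admissible.almostPeriodic_dissipation (hN : Admissible r N) (i : Fin m) :
    AlmostPeriodic (dissipation N i) := by
  let Φ : (CoeffIndex m → ℝ) →L[ℝ] ℝ :=
    ContinuousLinearMap.proj (.d i) - ∑ j, ContinuousLinearMap.proj (.a j i)
  have hΦ : (fun t ↦ Φ fun k ↦ N k t) = dissipation N i := by
    ext t
    simp [Φ, dissipation]
  exact hΦ ▸ AlmostPeriodic.comp_uniformContinuous hN.almostPeriodic Φ.uniformContinuous

lemma Bounds.sum_field_le (C : Bounds r N) (hβ : ∀ i, 0 ≤ N (.β i) t) :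
    ∑ i, field N r y t i ≤ -∑ i, dissipation N i t * y t i + m * (C.D * C.c₀⁻¹) := by
  have hbirth : ∑ i, N (.β i) t * ricker (N (.c i) t) (y (t - r i) i) ≤ m * (C.D * C.c₀⁻¹) := by
    calc ∑ i, N (.β i) t * ricker (N (.c i) t) (y (t - r i) i)
        ≤ ∑ _i : Fin m, C.D * C.c₀⁻¹ := by
          refine Finset.sum_le_sum fun i _ ↦ ?_
          exact mul_le_mul_of_nonneg (le_of_abs_le (C.abs_le (.β i) t))
            (ricker_le_inv C.c₀_pos (C.c₀_le i t)) (hβ i) (inv_nonneg.2 C.c₀_pos.le)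
      _ = m * (C.D * C.c₀⁻¹) := by simp
  have hexchange : ∑ i, ∑ j, N (.a i j) t * y t j = ∑ i, (∑ j, N (.a j i) t) * y t i := by
    rw [Finset.sum_comm]
    simp only [Finset.sum_mul]
  have hlinear : ∑ i, -N (.d i) t * y t i + ∑ i, (∑ j, N (.a j i) t) * y t i =
      -∑ i, dissipation N i t * y t i := by
    rw [← Finset.sum_add_distrib, ← Finset.sum_neg_distrib]
    exact Finset.sum_congr rfl fun i _ ↦ by rw [dissipation]; ring
  simp only [field, Finset.sum_add_distrib]
  rw [hexchange, hlinear]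
  gcongr

-- Along a nonnegative solution the total population `∑ yᵢ` has bounded growth, and decays
-- exponentially up to a constant while every `dissipation N i` exceeds a fixed threshold.
theorem Admissible.exists_isSolutionIn_of_le (hN : Admissible r N)
    (hdiss : JointlyPositive (dissipation N)) (hM : 0 ≤ M)
    (hderiv : ∀ t, T ≤ t → ∀ i, HasDerivAt (fun u ↦ y u i) (field N r y t i) t)
    (hy : ∀ t, T ≤ t → ∀ i, M ≤ y t i) :
    ∃ K, IsSolutionIn N r (Ici T) M K y := by
  obtain ⟨C⟩ := hN.nonempty_bounds
  obtain ⟨L, hL, ρ, hρ, δ, hδ, hrec⟩ :=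
    AlmostPeriodic.exists_hasRecurrentIntervals hN.almostPeriodic_dissipation hdiss
  have hy₀ : ∀ t, T ≤ t → ∀ i, 0 ≤ y t i := fun t ht i ↦ hM.trans (hy t ht i)
  have hsum_le := fun t ↦ C.sum_field_le (y := y) fun i ↦ hN.jointlyPositive_β.1 i t
  obtain ⟨K, hK⟩ := hrec.exists_forall_le (V := fun t ↦ ∑ i, y t i)
    (κ := m * (C.D * C.c₀⁻¹)) hδ (by have := C.D_pos; have := C.c₀_pos; positivity) hL.le hρ
    (fun t ht ↦ HasDerivAt.fun_sum fun i _ ↦ hderiv t ht i)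
    (fun t ht ↦ by
      have : 0 ≤ ∑ i, dissipation N i t * y t i :=
        Finset.sum_nonneg fun i _ ↦ mul_nonneg (hdiss.1 i t) (hy₀ t ht i)
      linarith [hsum_le t])
    fun t htS ht ↦ by
      have : δ * ∑ i, y t i ≤ ∑ i, dissipation N i t * y t i := by
        rw [Finset.mul_sum]
        exact Finset.sum_le_sum fun i _ ↦ mul_le_mul_of_nonneg_right (htS i) (hy₀ t ht i)
      linarith [hsum_le t]
  refine ⟨K, hderiv, fun t ht i ↦ ⟨hy t ht i, le_trans ?_ (hK t ht)⟩⟩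
  exact Finset.single_le_sum (f := fun i ↦ y t i) (fun j _ ↦ hy₀ t ht j) (Finset.mem_univ i)

end Dissipation

section EntireSolutions

variable {m : ℕ} {r : Fin m → ℝ} {N : CoeffIndex m → ℝ → ℝ} {y b : ℝ → Fin m → ℝ}
  {M M' K K' T ε : ℝ}

lemma tendstoUniformly_of_forall_abs_sub_lt {F F' : ℕ → ℝ → ℝ} {f : ℝ → ℝ} {l : Filter ℕ}
    (hl : l ≤ atTop) (hF : TendstoUniformly F f l)
    (hF' : ∀ n t, |F' n t - F n t| < 1 / ((n : ℝ) + 1)) : TendstoUniformly F' f l := by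
  have hdiff : TendstoUniformly (fun n t ↦ F' n t - F n t) 0 l := by
    refine Metric.tendstoUniformly_iff.2 fun ε hε ↦ ?_
    filter_upwards [(tendsto_one_div_add_atTop_nhds_zero_nat.mono_left hl).eventually_lt_const hε]
      with n hn t
    rw [Pi.zero_apply, dist_zero_left]
    exact (hF' n t).trans hn
  convert hdiff.add hF using 1
  · ext n t
    simp
  · rw [zero_add]

theorem Admissible.exists_isSolutionIn_univ_of_Ici (hN : Admissible r N) (hM : 0 ≤ M)
    (hy : IsSolutionIn N r (Ici T) M K y) : ∃ b, IsSolutionIn N r univ M K b := by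
  have hperiod : ∀ n : ℕ, ∃ s : ℝ, n ≤ s ∧ ∀ k t, |N k (t + s) - N k t| < 1 / ((n : ℝ) + 1) := by
    intro n
    obtain ⟨L, -, hL⟩ := AlmostPeriodic.exists_common_periods hN.almostPeriodic
      (Nat.one_div_pos_of_nat (α := ℝ) (n := n))
    obtain ⟨s, hs, hst⟩ := hL n
    exact ⟨s, hs.1, hst⟩
  choose s hs hst using hperiod
  have hconst : ∀ k, TendstoUniformly (fun _ : ℕ ↦ N k) (N k) (hyperfilter ℕ) := fun k ↦
    Metric.tendstoUniformly_iff.2 fun ε hε ↦ .of_forall fun _ _ ↦ by rwa [dist_self]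
  have hmem : ∀ A, ∀ᶠ n in hyperfilter ℕ, ∀ t, A ≤ t → t + s n ∈ Ici T := fun A ↦ by
    filter_upwards [Nat.hyperfilter_le_atTop
      (tendsto_natCast_atTop_atTop.eventually_ge_atTop (T - A))] with n hn t ht
    rw [mem_Ici]
    linarith [hs n, show T - A ≤ n from hn]
  obtain ⟨b, hb, -⟩ := hN.exists_isSolutionIn_univ hM hy hmem fun k ↦
    tendstoUniformly_of_forall_abs_sub_lt Nat.hyperfilter_le_atTop (hconst k)
      fun n t ↦ hst n k t
  exact ⟨b, hb⟩

-- Otherwise, along times `t n` and almost periods `s n` of the coefficients, the translates of `b`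
-- by `t n` and by `t n + s n` converge to two different solutions of one limit system.
lemma Admissible.exists_forall_abs_translate_sub_lt (hN : Admissible r N) (hM : 0 < M)
    (hb : IsSolutionIn N r univ M K b) (i : Fin m) (hε : 0 < ε) :
    ∃ δ > 0, ∀ s, (∀ k t, |N k (t + s) - N k t| < δ) → ∀ t, |b (t + s) i - b t i| < ε := by
  by_contra! hbad
  choose s hs t ht using fun n : ℕ ↦ hbad _ (Nat.one_div_pos_of_nat (α := ℝ) (n := n))
  have hmem : ∀ u : ℕ → ℝ, ∀ A, ∀ᶠ n in hyperfilter ℕ, ∀ τ, A ≤ τ → τ + u n ∈ univ :=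
    fun _ _ ↦ .of_forall fun _ _ _ ↦ mem_univ _
  choose N' hN' using fun k ↦
    (hN.almostPeriodic k).exists_tendstoUniformly_translate (hyperfilter ℕ) t
  obtain ⟨x, hx, hxlim⟩ := hN.exists_isSolutionIn_univ hM.le hb (hmem t) hN'
  obtain ⟨x', hx', hxlim'⟩ := hN.exists_isSolutionIn_univ hM.le hb
    (hmem fun n ↦ t n + s n) fun k ↦
      tendstoUniformly_of_forall_abs_sub_lt Nat.hyperfilter_le_atTop (hN' k) fun n τ ↦ by
        rw [← add_assoc]
        exact hs n k (τ + t n)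
  have heq : x' = x := (hN.of_tendstoUniformly_translate hN').eq_of_isSolutionIn_univ hM hx' hx
  have hdiff : Tendsto (fun n ↦ |b (t n + s n) i - b (t n) i|) (hyperfilter ℕ) (𝓝 0) := by
    simpa [heq] using ((hxlim' 0 i).sub (hxlim 0 i)).abs
  exact (ge_of_tendsto' hdiff ht).not_gt hε

theorem Admissible.almostPeriodic_of_isSolutionIn_univ (hN : Admissible r N) (hM : 0 < M)
    (hb : IsSolutionIn N r univ M K b) (i : Fin m) : AlmostPeriodic fun t ↦ b t i :=
  .of_common_periods hN.almostPeriodic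
    (continuous_iff_continuousAt.2 fun t ↦ (hb.hasDerivAt t (mem_univ t) i).continuousAt)
    fun _ hε ↦ hN.exists_forall_abs_translate_sub_lt hM hb i hε

lemma Admissible.exists_forall_abs_segment_sub_lt (hN : Admissible r N) (hM : 0 < M)
    (hM' : 0 < M') (hb : IsSolutionIn N r univ M K b) (hy : IsSolutionIn N r (Ici T) M' K' y)
    (hε : 0 < ε) :
    ∃ T', ∀ t, T' ≤ t → ∀ i, ∀ s ∈ Icc (-r i) 0, |y (t + s) i - b (t + s) i| < ε := by
  obtain ⟨R, hR⟩ := Finite.exists_le r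
  obtain ⟨τ, hτ⟩ := hN.exists_forall_abs_sub_lt (lt_min hM hM')
    ((min_le_left M M').trans (le_max_left M (max K K'))) hε
  have hclose := hτ y b T
    (hy.mono subset_rfl (min_le_right _ _) ((le_max_right _ _).trans (le_max_right _ _)))
    (hb.mono (subset_univ _) (min_le_left _ _) ((le_max_left _ _).trans (le_max_right _ _)))
  exact ⟨T + τ + R, fun t ht i s hs ↦ hclose _ (by linarith [hs.1, hR i]) i⟩

lemma Admissible.isSolutionIn_univ_unique (hN : Admissible r N) (hM : 0 < M) (hM' : 0 < M')
    (hb : IsSolutionIn N r univ M K b) (hy : IsSolutionIn N r univ M' K' y) : y = b :=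
  hN.eq_of_isSolutionIn_univ (lt_min hM hM')
    (hy.mono subset_rfl (min_le_right _ _) (le_max_right K K'))
    (hb.mono subset_rfl (min_le_left _ _) (le_max_left K K'))

end EntireSolutions

section Coefficients

variable {m : ℕ} {d : Fin m → ℝ → ℝ} {a : Fin m → Fin m → ℝ → ℝ} {β c : Fin m → ℝ → ℝ}
  {r : Fin m → ℝ} {φ : XN m r} {y b : ℝ → Fin m → ℝ} {M t₀ : ℝ}

lemma exists_pos_forall_le {ι : Type*} [Finite ι] {f : ι → ℝ} (hf : ∀ i, 0 < f i) :
    ∃ η > 0, ∀ i, η ≤ f i := by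
  have hev : ∀ᶠ η : ℝ in 𝓝[>] 0, ∀ i, η ≤ f i :=
    eventually_all.2 fun i ↦ mem_of_superset (Ioc_mem_nhdsGT (hf i)) fun _ h ↦ h.2
  obtain ⟨η, hη, hη₀⟩ := (hev.and self_mem_nhdsWithin).exists
  exact ⟨η, hη₀, hη⟩

lemma AlmostPeriodic.bddAbove_mul_exp_integral {f g : ℝ → ℝ} (hf : AlmostPeriodic f)
    (hg : AlmostPeriodic g) (τ : ℝ) :
    BddAbove (range fun t ↦ f t * Real.exp (∫ s in (t - τ)..t, g s)) := by
  obtain ⟨A, hA⟩ := hf.exists_abs_le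
  obtain ⟨B, hB⟩ := hg.exists_abs_le
  refine ⟨A * Real.exp (B * |τ|), forall_mem_range.2 fun t ↦ ?_⟩
  have hint : ∫ s in (t - τ)..t, g s ≤ B * |τ| := by
    have := intervalIntegral.norm_integral_le_of_norm_le_const (f := g) (C := B)
      (a := t - τ) (b := t) fun s _ ↦ hB s
    rw [sub_sub_cancel] at this
    exact (le_abs_self _).trans this
  exact mul_le_mul (le_of_abs_le (hA t)) (Real.exp_le_exp.2 hint) (Real.exp_pos _).le
    ((abs_nonneg _).trans (hA t))

lemma exists_mul_exp_neg_one_le {ι : Type*} [Finite ι] {r : ι → ℝ} {f : ι → ℝ → ℝ}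
    (hr : ∀ i, 0 < r i) (hf : ∀ i, BddAbove (range (f i)))
    (hsup : ∀ i, r i * sSup (range (f i)) < Real.exp 1) :
    ∃ η > 0, ∀ i t, f i t * Real.exp (-1) ≤ 1 / r i - η := by
  obtain ⟨η, hη, hgap⟩ :=
    exists_pos_forall_le (f := fun i ↦ 1 / r i - sSup (range (f i)) * Real.exp (-1)) fun i ↦ by
      rw [sub_pos, lt_div_iff₀ (hr i), Real.exp_neg, mul_right_comm, ← div_eq_mul_inv,
        div_lt_one (Real.exp_pos 1), mul_comm]
      exact hsup i
  refine ⟨η, hη, fun i t ↦ ?_⟩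
  have hle : f i t * Real.exp (-1) ≤ sSup (range (f i)) * Real.exp (-1) := by
    gcongr
    exact le_csSup (hf i) (mem_range_self t)
  linarith [hgap i]

lemma admissible_coeffs (hr : ∀ i, 0 < r i) (hd : ∀ i, AlmostPeriodic (d i))
    (ha : ∀ i j, AlmostPeriodic (a i j)) (hβ : ∀ i, AlmostPeriodic (β i))
    (hc : ∀ i, AlmostPeriodic (c i)) (ha_nonneg : ∀ i j t, 0 ≤ a i j t)
    (hβ_pos : JointlyPositive β) (hc_ge : ∃ c₀ > 0, ∀ i t, c₀ ≤ c i t)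
    (hcond : ∀ i, r i * sSup (range fun t : ℝ ↦
      β i t * Real.exp (∫ s in (t - r i)..t, d i s)) < Real.exp 1) :
    Admissible r (coeffs d a β c) where
  delay_pos := hr
  almostPeriodic
    | .d i => hd i
    | .a i j => ha i j
    | .β i => hβ i
    | .c i => hc i
  a_nonneg := ha_nonneg
  jointlyPositive_β := hβ_pos
  c_ge := hc_ge
  birth_le := exists_mul_exp_neg_one_le hr
    (fun i ↦ (hβ i).bddAbove_mul_exp_integral (hd i) (r i)) hcond

lemma Admissible.exists_solN_one (hN : Admissible r (coeffs d a β c)) :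
    ∃ y, SolN d a β c r (fun _ _ ↦ 1) y := by
  obtain ⟨y, hycont, hy_one, hderiv⟩ := hN.exists_forward_solution
  refine ⟨y, fun i ↦ Continuous.continuousOn (by fun_prop), fun i s ↦ ?_, fun i t ht ↦ ?_⟩
  · rw [hy_one s s.2.2, Pi.one_apply]
  · exact field_coeffs d a β c r y t i ▸ hderiv i t ht

lemma Admissible.exists_isSolutionIn_of_solN (hN : Admissible r (coeffs d a β c))
    (hdiss : JointlyPositive (dissipation (coeffs d a β c))) (hy : SolN d a β c r φ y)
    (hM : 0 ≤ M) (hle : ∀ t, t₀ ≤ t → ∀ i, M ≤ y t i) :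
    ∃ T K, IsSolutionIn (coeffs d a β c) r (Ici T) M K y := by
  have hpos : 0 < max t₀ 1 := lt_max_of_lt_right one_pos
  exact ⟨max t₀ 1, hN.exists_isSolutionIn_of_le hdiss hM
    (fun t ht ↦ hasDerivAt_of_hasDerivWithinAt_field hN.delay_pos hN.continuous hy.1 hy.1
      (fun i t ht ↦ (field_coeffs d a β c r y t i).symm ▸ hy.2.2 i t ht) (hpos.trans_le ht))
    fun t ht ↦ hle t ((le_max_left _ _).trans ht)⟩

lemma entireSolN_of_isSolutionIn_univ {K : ℝ} (hb : IsSolutionIn (coeffs d a β c) r univ M K b) :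
    EntireSolN d a β c r b :=
  fun i t ↦ field_coeffs d a β c r b t i ▸ hb.hasDerivAt t (mem_univ t) i

lemma exists_isSolutionIn_univ_of_entireSolN (hb : EntireSolN d a β c r b)
    (hlower : ∀ i, ∃ δ > 0, ∀ t, δ ≤ b t i) (hupper : ∀ i, BddAbove (range fun t ↦ b t i)) :
    ∃ M > 0, ∃ K, IsSolutionIn (coeffs d a β c) r univ M K b := by
  choose δ hδ hδb using hlower
  choose B hB using hupper
  obtain ⟨M, hM, hMδ⟩ := exists_pos_forall_le hδ
  obtain ⟨K, hK⟩ := Finite.exists_le B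
  exact ⟨M, hM, K, fun t _ i ↦ (field_coeffs d a β c r b t i).symm ▸ hb i t,
    fun t _ i ↦ ⟨(hMδ i).trans (hδb i t), (hB i (mem_range_self t)).trans (hK i)⟩⟩

end Coefficients

theorem statement19_general
    {m : ℕ} (d : Fin m → ℝ → ℝ) (a : Fin m → Fin m → ℝ → ℝ) (β c : Fin m → ℝ → ℝ)
    (r : Fin m → ℝ) (hr : ∀ i, 0 < r i)
    (hd : ∀ i, AlmostPeriodic (d i)) (ha : ∀ i j, AlmostPeriodic (a i j))
    (hβ : ∀ i, AlmostPeriodic (β i)) (hc : ∀ i, AlmostPeriodic (c i))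
    (ha_nonneg : ∀ i j t, 0 ≤ a i j t) (hβ_pos : JointlyPositive β)
    (hc_ge : ∃ c₀ > 0, ∀ i t, c₀ ≤ c i t)
    (hdiss : JointlyPositive fun i t ↦ d i t - ∑ j, a j i t)
    (hcond : ∀ i, r i * sSup (range fun t : ℝ ↦
      β i t * Real.exp (∫ s in (t - r i)..t, d i s)) < Real.exp 1)
    (hpers : ∀ φ : XN m r, XPos φ → (∀ i, 0 < φ i (pt0N r hr i)) →
      ∀ y : ℝ → Fin m → ℝ, SolN d a β c r φ y →
        ∃ M > 0, ∃ t₀, ∀ t, t₀ ≤ t → ∀ i, M ≤ y t i) :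
    ∃ b : ℝ → Fin m → ℝ,
      (∀ i, AlmostPeriodic (fun t ↦ b t i)) ∧
      (∀ i, ∃ δ > 0, ∀ t, δ ≤ b t i) ∧
      EntireSolN d a β c r b ∧
      (∀ φ : XN m r, XPos φ → (∀ i, 0 < φ i (pt0N r hr i)) →
        ∀ y : ℝ → Fin m → ℝ, SolN d a β c r φ y →
          ∀ ε > 0, ∃ T : ℝ, ∀ t, T ≤ t → ∀ i, ∀ s : Icc (-r i) (0 : ℝ),
            |y (t + (s : ℝ)) i - b (t + (s : ℝ)) i| < ε) ∧
      ∀ b' : ℝ → Fin m → ℝ,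
        (∀ i, BddAbove (range fun t ↦ b' t i)) →
        (∀ i, ∃ δ > 0, ∀ t, δ ≤ b' t i) →
        EntireSolN d a β c r b' →
        b' = b := by
  have hN : Admissible r (coeffs d a β c) :=
    admissible_coeffs hr hd ha hβ hc ha_nonneg hβ_pos hc_ge hcond
  have hbounded : ∀ φ : XN m r, XPos φ → (∀ i, 0 < φ i (pt0N r hr i)) →
      ∀ y, SolN d a β c r φ y →
        ∃ M > 0, ∃ T K, IsSolutionIn (coeffs d a β c) r (Ici T) M K y := fun φ hφ hφ₀ y hy ↦ by
    obtain ⟨M, hM, t₀, hle⟩ := hpers φ hφ hφ₀ y hy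
    exact ⟨M, hM, hN.exists_isSolutionIn_of_solN hdiss hy hM.le hle⟩
  obtain ⟨y, hy⟩ := hN.exists_solN_one
  obtain ⟨M, hM, T, K, hyMK⟩ := hbounded _ (fun _ _ ↦ zero_le_one) (fun _ ↦ one_pos) y hy
  obtain ⟨b, hb⟩ := hN.exists_isSolutionIn_univ_of_Ici hM.le hyMK
  refine ⟨b, hN.almostPeriodic_of_isSolutionIn_univ hM hb,
    fun i ↦ ⟨M, hM, fun t ↦ (hb.mem_Icc t (mem_univ t) i).1⟩,
    entireSolN_of_isSolutionIn_univ hb, fun φ hφ hφ₀ x hx ε hε ↦ ?_, fun b' hupper hlower hb' ↦ ?_⟩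
  · obtain ⟨M', hM', T', K', hxMK⟩ := hbounded φ hφ hφ₀ x hx
    obtain ⟨T'', hclose⟩ := hN.exists_forall_abs_segment_sub_lt hM hM' hb hxMK hε
    exact ⟨T'', fun t ht i s ↦ hclose t ht i s s.2⟩
  · obtain ⟨M', hM', K', hbMK'⟩ := exists_isSolutionIn_univ_of_entireSolN hb' hlower hupper
    exact hN.isSolutionIn_univ_unique hM hM' hb hbMK'

/-- under the integral condition
`rᵢ · sup_t ( β̃ᵢ(t) e^{∫_{t-rᵢ}^t d̃ᵢ} ) < e` and uniform persistence at `0`, there is a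
unique positive almost periodic solution of the Nicholson system, and it asymptotically
attracts every solution with initial value `φ ∈ X₊`, `φ(0) ≫ 0`. -/
theorem statement19
    {m : ℕ} (hm : 1 ≤ m)
    (d : Fin m → ℝ → ℝ) (a : Fin m → Fin m → ℝ → ℝ) (β c : Fin m → ℝ → ℝ)
    (r : Fin m → ℝ) (hr : ∀ i, 0 < r i)
    (hN : NicholsonHyps m d a β c)
    (hcond : ∀ i,
      r i * sSup (Set.range fun t : ℝ =>
        β i t * Real.exp (∫ s in (t - r i)..t, d i s)) < Real.exp 1)
    (hpers : ∃ M : ℝ, 0 < M ∧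
      ∀ φ : XN m r, XPos φ → (∀ i, 0 < φ i (pt0N r hr i)) →
        ∀ y : ℝ → Fin m → ℝ, SolN d a β c r φ y →
          ∃ t₀ : ℝ, ∀ t, t₀ ≤ t → ∀ i, M ≤ y t i) :
    ∃ b : ℝ → Fin m → ℝ,
      -- b is almost periodic, componentwise
      (∀ i, AlmostPeriodic (fun t => b t i)) ∧
      -- b is positive, bounded away from 0
      (∀ i, ∃ δ > 0, ∀ t, δ ≤ b t i) ∧
      -- b is an entire solution of the Nicholson system
      EntireSolN d a β c r b ∧
      -- b attracts every solution starting at φ ∈ X₊ with φ(0) ≫ 0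
      (∀ φ : XN m r, XPos φ → (∀ i, 0 < φ i (pt0N r hr i)) →
        ∀ y : ℝ → Fin m → ℝ, SolN d a β c r φ y →
          ∀ ε > 0, ∃ T : ℝ, ∀ t, T ≤ t → ∀ i, ∀ s : Set.Icc (-(r i)) (0:ℝ),
            |y (t + (s : ℝ)) i - b (t + (s : ℝ)) i| < ε) ∧
      -- b is the unique positive almost periodic entire solution
      ∀ b' : ℝ → Fin m → ℝ,
        (∀ i, AlmostPeriodic (fun t => b' t i)) →
        (∀ i, ∃ δ > 0, ∀ t, δ ≤ b' t i) →
        EntireSolN d a β c r b' →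
        b' = b := by
  obtain ⟨hd, ha, hβ, hc, -, ha_nonneg, -, hβ_pos, hc_ge, hdiss⟩ := hN
  obtain ⟨M, hM, hpers⟩ := hpers
  obtain ⟨b, hAP, hpos, hsol, hattr, huniq⟩ := statement19_general d a β c r hr hd ha hβ hc
    ha_nonneg ⟨fun i t ↦ (hβ_pos i t).le, 0, fun i ↦ hβ_pos i 0⟩ hc_ge
    ⟨fun i t ↦ (hdiss i t).le, 0, fun i ↦ hdiss i 0⟩ hcond
    fun φ hφ hφ₀ y hy ↦ ⟨M, hM, hpers φ hφ hφ₀ y hy⟩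
  exact ⟨b, hAP, hpos, hsol, hattr, fun b' hAP' ↦ huniq b' fun i ↦ (hAP' i).bddAbove_range⟩

end Nicholson
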